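/- arXiv:2104.09381 — 12 statements merged into one kernel-verified Lean document; each statement's English description precedes it below -/
import Mathlib

section
/- (Voltage Collapse) Let E>0, g_l>0, n ≥ 1, and nominal demands P_{0,i} ≥ 0 with Σ_{i=1}^n P_{0,i} > E²·g_l/4. Suppose g : [0,∞) → ℝⁿ is differentiable, g_i(t) ≥ 0 for all i and all t ≥ 0, and g_i'(t) = P_{0,i} − v(g(t))²·g_i(t) for all t ≥ 0 and all i, where v(g) = E·g_l/(Σ_{j=1}^n g_j + g_l). Then Σ_{i=1}^n g_i(t) → ∞ as t → ∞, and consequently v(g(t)) → 0 as t → ∞; i.e., the system undergoes voltage collapse. -/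
/-- Voltage collapse: if the total demand exceeds the network capacity `E²·g_l/4`, then under
the constant-power load dynamics the total conductance grows unboundedly and the voltage
`v(g(t)) = E·g_l/(Σᵢ gᵢ(t) + g_l)` tends to zero. -/
theorem stmt_2 (E gl : ℝ) (hE : 0 < E) (hgl : 0 < gl) (n : ℕ) (hn : 1 ≤ n)
    (P0 : Fin n → ℝ) (hP0 : ∀ i, 0 ≤ P0 i)
    (hover : E ^ 2 * gl / 4 < ∑ i, P0 i)
    (g : ℝ → Fin n → ℝ)
    (hnonneg : ∀ t : ℝ, 0 ≤ t → ∀ i : Fin n, 0 ≤ g t i)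
    (hdyn : ∀ t : ℝ, 0 ≤ t → ∀ i : Fin n,
      HasDerivAt (fun s => g s i)
        (P0 i - (E * gl / ((∑ j, g t j) + gl)) ^ 2 * g t i) t) :
    Filter.Tendsto (fun t => ∑ i, g t i) Filter.atTop Filter.atTop ∧
    Filter.Tendsto (fun t => E * gl / ((∑ i, g t i) + gl)) Filter.atTop (nhds 0) := by
  have hder : ∀ t : ℝ, 0 ≤ t → HasDerivAt (fun s => ∑ i, g s i)
      (∑ i, (P0 i - (E * gl / ((∑ j, g t j) + gl)) ^ 2 * g t i)) t := fun t ht =>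
    HasDerivAt.fun_sum fun i _ => hdyn t ht i
  have hbound : ∀ t : ℝ, 0 ≤ t → (∑ i, P0 i) - E ^ 2 * gl / 4 ≤
      ∑ i, (P0 i - (E * gl / ((∑ j, g t j) + gl)) ^ 2 * g t i) := by
    intro t ht
    rw [Finset.sum_sub_distrib, ← Finset.mul_sum]
    have hS : 0 ≤ ∑ j, g t j := Finset.sum_nonneg fun i _ => hnonneg t ht i
    generalize (∑ j, g t j) = S at hS
    have hpos : 0 < S + gl := by linarith
    have : (E * gl / (S + gl)) ^ 2 * S ≤ E ^ 2 * gl / 4 := by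
      rw [div_pow, div_mul_eq_mul_div, div_le_div_iff₀ (by positivity) (by norm_num)]
      have h := mul_nonneg (mul_nonneg (sq_nonneg E) hgl.le) (sq_nonneg (S - gl))
      nlinarith [h]
    linarith
  set c := (∑ i, P0 i) - E ^ 2 * gl / 4 with hc
  have hcpos : 0 < c := by linarith
  have hder2 : ∀ t : ℝ, 0 ≤ t → HasDerivAt (fun s => (∑ i, g s i) - c * s)
      ((∑ i, (P0 i - (E * gl / ((∑ j, g t j) + gl)) ^ 2 * g t i)) - c) t := by
    intro t ht
    have h := (hder t ht).fun_sub ((hasDerivAt_id t).const_mul c)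
    simpa using h
  have hmono : MonotoneOn (fun s => (∑ i, g s i) - c * s) (Set.Ici 0) := by
    apply monotoneOn_of_deriv_nonneg (convex_Ici 0)
    · exact fun t ht => (hder2 t ht).continuousAt.continuousWithinAt
    · intro t ht
      exact (hder2 t (interior_subset ht)).differentiableAt.differentiableWithinAt
    · intro t ht
      have ht' : 0 ≤ t := interior_subset ht
      rw [(hder2 t ht').deriv]
      linarith [hbound t ht']
  have hlim : Filter.Tendsto (fun t => ∑ i, g t i) Filter.atTop Filter.atTop := by
    refine Filter.tendsto_atTop_mono' _ ?_ (Filter.tendsto_id.const_mul_atTop hcpos)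
    filter_upwards [Filter.eventually_ge_atTop 0] with t ht
    have h := hmono (Set.mem_Ici.2 le_rfl) (Set.mem_Ici.2 ht) ht
    have h0 : 0 ≤ ∑ j, g 0 j := Finset.sum_nonneg fun i _ => hnonneg 0 le_rfl i
    simp only [mul_zero, sub_zero] at h
    simp only [id]
    linarith
  exact ⟨hlim, (Filter.tendsto_atTop_add_const_right _ gl hlim).const_div_atTop _⟩
end

section
/- (Equilibrium Characterization, supply below capacity) Let E>0, g_l>0, n ≥ 1, and P_{0,i} ≥ 0 with 0 < Σᵢ P_{0,i} < E²·g_l/4. Then there exist exactly two vectors g* ∈ ℝⁿ_{≥0} satisfying the equilibrium equations v(g*)²·g*ᵢ = P_{0,i} for all i = 1,…,n, where v(g) = E·g_l/(Σⱼ gⱼ + g_l); denoting them g₁* and g₂*, their total conductances satisfy Σᵢ (g₁*)ᵢ < g_l < Σᵢ (g₂*)ᵢ. -/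
theorem quad_aux (c P k : ℝ) (hP : 0 < P) (hk : 0 < k) (hc : 4 * P * k < c) :
    ∃ s t : ℝ, 0 < s ∧ s < k ∧ k < t ∧ c * s = P * (s + k) ^ 2 ∧ c * t = P * (t + k) ^ 2 ∧
      ∀ x, c * x = P * (x + k) ^ 2 → x = s ∨ x = t := by
  have hPk : 0 < P * k := mul_pos hP hk
  have hD : 0 < c * (c - 4 * P * k) := mul_pos (by linarith) (by linarith)
  obtain ⟨r, hr, hr2⟩ : ∃ r : ℝ, 0 < r ∧ r ^ 2 = c * (c - 4 * P * k) :=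
    ⟨Real.sqrt _, Real.sqrt_pos.2 hD, Real.sq_sqrt hD.le⟩
  have h1 : r < c - 2 * P * k := by
    apply lt_of_pow_lt_pow_left₀ 2 (by linarith)
    nlinarith [mul_pos hPk hPk]
  have h2 : c - 4 * P * k < r := by
    apply lt_of_pow_lt_pow_left₀ 2 hr.le
    nlinarith [mul_pos hPk (sub_pos.2 hc)]
  refine ⟨(c - 2 * P * k - r) / (2 * P), (c - 2 * P * k + r) / (2 * P), ?_, ?_, ?_, ?_, ?_, ?_⟩
  · apply div_pos <;> linarith
  · rw [div_lt_iff₀ (by linarith)]; linarith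
  · rw [lt_div_iff₀ (by linarith)]; linarith
  · field_simp
    linear_combination (-1) * hr2
  · field_simp
    linear_combination (-1) * hr2
  · intro x hx
    have : (x * (2 * P) - (c - 2 * P * k - r)) * (x * (2 * P) - (c - 2 * P * k + r)) = 0 := by
      linear_combination (-4 * P) * hx - hr2
    rcases mul_eq_zero.1 this with h | h
    · left; rw [eq_div_iff (by positivity)]; linarith
    · right; rw [eq_div_iff (by positivity)]; linarith

/-- Equilibrium characterization below capacity: when `0 < Σᵢ P₀ᵢ < E²·g_l/4`, there exist
exactly two nonnegative equilibria `g₁*, g₂*` of the inflexible-load dynamics, with total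
conductances satisfying `Σᵢ (g₁*)ᵢ < g_l < Σᵢ (g₂*)ᵢ`. -/
theorem stmt_4 (E gl : ℝ) (hE : 0 < E) (hgl : 0 < gl) (n : ℕ) (hn : 1 ≤ n)
    (P0 : Fin n → ℝ) (hP0 : ∀ i, 0 ≤ P0 i)
    (hpos : 0 < ∑ i, P0 i) (hcap : ∑ i, P0 i < E ^ 2 * gl / 4) :
    ∃ g₁ g₂ : Fin n → ℝ,
      g₁ ≠ g₂ ∧
      (∀ i, 0 ≤ g₁ i) ∧ (∀ i, 0 ≤ g₂ i) ∧
      (∀ i, (E * gl / ((∑ j, g₁ j) + gl)) ^ 2 * g₁ i = P0 i) ∧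
      (∀ i, (E * gl / ((∑ j, g₂ j) + gl)) ^ 2 * g₂ i = P0 i) ∧
      (∑ i, g₁ i) < gl ∧ gl < (∑ i, g₂ i) ∧
      (∀ g : Fin n → ℝ, (∀ i, 0 ≤ g i) →
        (∀ i, (E * gl / ((∑ j, g j) + gl)) ^ 2 * g i = P0 i) →
        g = g₁ ∨ g = g₂) := by
  obtain ⟨s, t, hs, hsk, hkt, es, et, hu⟩ := quad_aux ((E * gl) ^ 2) (∑ i, P0 i) gl hpos hgl
    (by nlinarith [mul_pos hgl (sub_pos.2 hcap)])
  have hc : 0 < (E * gl) ^ 2 := by positivity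
  have key : ∀ x : ℝ, (E * gl) ^ 2 * x = (∑ i, P0 i) * (x + gl) ^ 2 →
      ∑ i, P0 i * ((x + gl) ^ 2 / (E * gl) ^ 2) = x := by
    intro x hx
    rw [← Finset.sum_mul, ← mul_div_assoc, ← hx, mul_div_cancel_left₀ _ hc.ne']
  have ks := key s es
  have kt := key t et
  refine ⟨fun i => P0 i * ((s + gl) ^ 2 / (E * gl) ^ 2),
    fun i => P0 i * ((t + gl) ^ 2 / (E * gl) ^ 2), ?_, ?_, ?_, ?_, ?_, ?_, ?_, ?_⟩
  · intro h
    have := congrArg (fun f : Fin n → ℝ => ∑ i, f i) h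
    simp only [ks, kt] at this
    linarith
  · intro i
    exact mul_nonneg (hP0 i) (by positivity)
  · intro i
    exact mul_nonneg (hP0 i) (by positivity)
  · intro i
    simp only [ks]
    have : s + gl ≠ 0 := by linarith
    field_simp
  · intro i
    simp only [kt]
    have : t + gl ≠ 0 := by linarith
    field_simp
  · simpa only [ks] using hsk
  · simpa only [kt] using hkt
  · intro g hg h
    have hS : 0 ≤ ∑ i, g i := Finset.sum_nonneg fun i _ => hg i
    have hne : (∑ i, g i) + gl ≠ 0 := by linarith
    have hgi : ∀ i, g i = P0 i * (((∑ i, g i) + gl) ^ 2 / (E * gl) ^ 2) := by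
      intro i
      rw [← h i]
      field_simp
    have hx : (E * gl) ^ 2 * (∑ i, g i) = (∑ i, P0 i) * ((∑ i, g i) + gl) ^ 2 := by
      have : ∑ i, P0 i = (E * gl / ((∑ j, g j) + gl)) ^ 2 * ∑ i, g i := by
        rw [Finset.mul_sum]
        exact Finset.sum_congr rfl fun i _ => (h i).symm
      rw [this]
      field_simp
    rcases hu _ hx with e | e
    · left; funext i; rw [hgi i, e]
    · right; funext i; rw [hgi i, e]
end

section
/- (Equilibrium Characterization, supply at capacity) Let E>0, g_l>0, n ≥ 1, and P_{0,i} ≥ 0 with Σᵢ P_{0,i} = E²·g_l/4. Then there exists exactly one g* ∈ ℝⁿ_{≥0} satisfying v(g*)²·g*ᵢ = P_{0,i} for all i, where v(g) = E·g_l/(Σⱼ gⱼ + g_l); it is given by g*ᵢ = 4·P_{0,i}/E², it satisfies Σᵢ g*ᵢ = g_l, and the equilibrium voltage is v(g*) = E/2. -/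
/-- Equilibrium characterization at capacity: when `Σᵢ P₀ᵢ = E²·g_l/4`, the unique nonnegative
equilibrium of the inflexible-load dynamics is `g*ᵢ = 4·P₀ᵢ/E²`; it satisfies `Σᵢ g*ᵢ = g_l`
and the equilibrium voltage is `E/2`. -/
theorem stmt_5 (E gl : ℝ) (hE : 0 < E) (hgl : 0 < gl) (n : ℕ) (hn : 1 ≤ n)
    (P0 : Fin n → ℝ) (hP0 : ∀ i, 0 ≤ P0 i)
    (hcap : ∑ i, P0 i = E ^ 2 * gl / 4) :
    (∀ i, 0 ≤ 4 * P0 i / E ^ 2) ∧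
    (∑ i, 4 * P0 i / E ^ 2) = gl ∧
    E * gl / ((∑ i, 4 * P0 i / E ^ 2) + gl) = E / 2 ∧
    (∀ i, (E * gl / ((∑ j, 4 * P0 j / E ^ 2) + gl)) ^ 2 * (4 * P0 i / E ^ 2) = P0 i) ∧
    (∀ g : Fin n → ℝ, (∀ i, 0 ≤ g i) →
      (∀ i, (E * gl / ((∑ j, g j) + gl)) ^ 2 * g i = P0 i) →
      ∀ i, g i = 4 * P0 i / E ^ 2) := by
  have hs : (∑ i, 4 * P0 i / E ^ 2) = gl := by
    rw [← Finset.sum_div, ← Finset.mul_sum, hcap]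
    field_simp
  have hv : E * gl / (gl + gl) = E / 2 := by
    field_simp
    ring
  refine ⟨fun i => ?_, hs, ?_, fun i => ?_, fun g hg h i => ?_⟩
  · have := hP0 i
    positivity
  · rw [hs, hv]
  · rw [hs, hv]
    field_simp
    try ring
  · have hS : 0 ≤ ∑ j, g j := Finset.sum_nonneg fun j _ => hg j
    have h1 : (E * gl / ((∑ j, g j) + gl)) ^ 2 * (∑ j, g j) = E ^ 2 * gl / 4 := by
      rw [Finset.mul_sum, ← hcap]
      exact Finset.sum_congr rfl fun j _ => h j
    have h2 : (∑ j, g j) = gl := by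
      generalize (∑ j, g j) = S at hS h1
      have hp : 0 < S + gl := by linarith
      rw [div_pow, div_mul_eq_mul_div, div_eq_div_iff (by positivity) (by norm_num)] at h1
      have h3 : (E ^ 2 * gl) * (S - gl) ^ 2 = 0 := by linear_combination -h1
      have h4 : (S - gl) ^ 2 = 0 := by
        rcases mul_eq_zero.mp h3 with h | h
        · exact absurd h (by positivity)
        · exact h
      linarith [pow_eq_zero_iff (two_ne_zero) |>.mp h4]
    have h5 := h i
    rw [h2, hv] at h5
    rw [← h5]
    field_simp
    try ring
end

section
/- (Stable Region Characterization) Let E>0, g_l>0, n ≥ 1, g* ∈ ℝⁿ_{≥0}, ḡ* = Σᵢ g*ᵢ, v* = E·g_l/(ḡ* + g_l), and let J(g*) = (2v*²/(ḡ*+g_l))·g*·𝟙ⁿᵀ − v*²·Iₙ be the Jacobian of the inflexible-load dynamics at g*. Then all eigenvalues of J(g*) have negative real part (i.e., J(g*) is Hurwitz, so the equilibrium is asymptotically stable by linearization) if and only if ḡ* < g_l. -/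
/-- Stable region characterization: the Jacobian
`J(g*) = (2v*²/(ḡ*+g_l))·g*·𝟙ᵀ − v*²·I` of the inflexible-load dynamics is Hurwitz
(all eigenvalues have negative real part) if and only if `ḡ* = Σᵢ g*ᵢ < g_l`. -/
theorem stmt_9 (E gl : ℝ) (hE : 0 < E) (hgl : 0 < gl) (n : ℕ) (hn : 1 ≤ n)
    (g : Fin n → ℝ) (hg : ∀ i, 0 ≤ g i)
    (J : Matrix (Fin n) (Fin n) ℝ)
    (hJ : ∀ i j, J i j =
      (2 * (E * gl / ((∑ k, g k) + gl)) ^ 2 / ((∑ k, g k) + gl)) * g i -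
        if i = j then (E * gl / ((∑ k, g k) + gl)) ^ 2 else 0) :
    (∀ μ ∈ spectrum ℂ (J.map (Complex.ofReal : ℝ → ℂ)), μ.re < 0) ↔
      (∑ i, g i) < gl := by
  have hS : 0 ≤ ∑ k, g k := Finset.sum_nonneg fun i _ => hg i
  set S := ∑ k, g k with hSdef
  have hD : 0 < S + gl := by linarith
  set w := (E * gl / (S + gl)) ^ 2 with hw
  have hwpos : 0 < w := by positivity
  set c := 2 * w / (S + gl) with hc
  have hlam : c * S - w = w * (S - gl) / (S + gl) := by
    rw [hc]; field_simp; ring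
  have hspec : ∀ μ : ℂ, μ ∈ spectrum ℂ (J.map (Complex.ofReal : ℝ → ℂ)) ↔
      (algebraMap ℂ (Matrix (Fin n) (Fin n) ℂ) μ - J.map (Complex.ofReal : ℝ → ℂ)).det = 0 := by
    intro μ
    rw [spectrum.mem_iff, Matrix.isUnit_iff_isUnit_det, isUnit_iff_ne_zero, not_not]
  have hent : ∀ (μ : ℂ) i j,
      (algebraMap ℂ (Matrix (Fin n) (Fin n) ℂ) μ - J.map (Complex.ofReal : ℝ → ℂ)) i j
        = (if i = j then μ + (w : ℂ) else 0) - (c : ℂ) * (g i : ℂ) := by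
    intro μ i j
    rw [Matrix.sub_apply, Matrix.algebraMap_matrix_apply, Matrix.map_apply, hJ]
    split_ifs <;> simp <;> ring
  have hSC : ∑ i, (g i : ℂ) = (S : ℂ) := by rw [hSdef]; push_cast; rfl
  constructor
  · intro h
    have hm := h ((c * S - w : ℝ) : ℂ) (by
      rw [hspec, ← Matrix.exists_vecMul_eq_zero_iff]
      refine ⟨fun _ => 1, ?_, ?_⟩
      · intro h0
        exact one_ne_zero (congrFun h0 ⟨0, hn⟩)
      · ext j
        simp only [Matrix.vecMul, dotProduct, hent, one_mul, Finset.sum_sub_distrib,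
          ← Finset.mul_sum, hSC]
        simp)
    rw [Complex.ofReal_re, hlam] at hm
    by_contra hcon
    push Not at hcon
    have : 0 ≤ w * (S - gl) / (S + gl) :=
      div_nonneg (mul_nonneg hwpos.le (by linarith)) hD.le
    linarith
  · intro h μ hμ
    rw [hspec, ← Matrix.exists_mulVec_eq_zero_iff] at hμ
    obtain ⟨x, hx, hx0⟩ := hμ
    have hrow : ∀ i, (μ + w) * x i = c * g i * ∑ j, x j := by
      intro i
      have h1 := congrFun hx0 i
      simp only [Matrix.mulVec, dotProduct, hent, sub_mul, Finset.sum_sub_distrib,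
        ← Finset.mul_sum] at h1
      simp at h1
      linear_combination h1
    by_cases hs : ∑ j, x j = 0
    · obtain ⟨i, hi⟩ := Function.ne_iff.mp hx
      have h1 := hrow i
      rw [hs, mul_zero] at h1
      have h2 : μ = ((-w : ℝ) : ℂ) := by
        rcases mul_eq_zero.mp h1 with h2 | h2
        · push_cast; linear_combination h2
        · exact absurd h2 hi
      rw [h2, Complex.ofReal_re]; linarith
    · have h1 : (μ + w) * ∑ j, x j = c * S * ∑ j, x j := by
        rw [Finset.mul_sum, Finset.sum_congr rfl fun i _ => hrow i, ← Finset.sum_mul,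
          ← Finset.mul_sum, hSC]
      have h2 : μ = ((c * S - w : ℝ) : ℂ) := by
        push_cast; linear_combination mul_right_cancel₀ hs h1
      rw [h2, Complex.ofReal_re, hlam]
      exact div_neg_of_neg_of_pos (mul_neg_of_pos_of_neg hwpos (by linarith)) hD
end

section
/- (Equilibrium Characterization of the VCS-controlled system) Let E>0, g_l>0, n = n_F + n_I with flexible loads F = {1,…,n_F} (n_F ≥ 1) and inflexible loads I = {n_F+1,…,n}, demands P_{0,i} ≥ 0, load-shedding parameters κ_i > 0 for i ∈ F with κ̄ = Σ_{i∈F} κ_i, and a, b > 0. Set P̄₀ = Σᵢ P_{0,i}, P_max = E²·g_l/4, v(g) = E·g_l/(Σⱼ gⱼ + g_l), and ΔPᵢ(g) = v(g)²·gᵢ − P_{0,i}. A point (g, φ, ĝ) ∈ ℝⁿ_{≥0} × ℝ × ℝ^{n_F} is an equilibrium of the closed-loop dynamics ġᵢ = −ΔPᵢ(g) − κᵢ·φ + b·(ĝᵢ − gᵢ) for i ∈ F, ġᵢ = −ΔPᵢ(g) for i ∈ I, φ̇ = (Σⱼ ΔPⱼ(g)) · (E·g_l)²·(g_l − ḡ)/(ḡ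 + g_l)³ with ḡ = Σⱼ gⱼ, and ĝ̇ᵢ = −a·(ĝᵢ − gᵢ) for i ∈ F, if and only if ĝᵢ = gᵢ for all i ∈ F and one of the following holds: (load satisfaction) ΔPᵢ(g) = 0 for all i ∈ {1,…,n} and φ = 0; or (proportional allocation) ΔPᵢ(g) = (κᵢ/κ̄)·(P_max − P̄₀) for all i ∈ F, ΔPᵢ(g) = 0 for all i ∈ I, and φ = (P̄₀ − P_max)/κ̄. -/
/-- Load voltage `v(g) = E·g_l/(Σⱼ gⱼ + g_l)` of the star DC network. -/
noncomputable def loadVoltage (E gl : ℝ) {ι : Type*} [Fintype ι] (g : ι → ℝ) : ℝ :=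
  E * gl / ((∑ j, g j) + gl)

/-- Power mismatch `ΔPᵢ(g) = v(g)²·gᵢ − P₀ᵢ` of load `i`. -/
noncomputable def deltaP (E gl : ℝ) {ι : Type*} [Fintype ι] (P0 g : ι → ℝ) (i : ι) : ℝ :=
  (loadVoltage E gl g) ^ 2 * g i - P0 i

/-- Equilibrium characterization of the VCS-controlled closed-loop system: a point
`(g, φ, ghat)` is an equilibrium iff `ghatᵢ = gᵢ` for all flexible `i` and either the load
satisfaction conditions (`ΔPᵢ = 0` for all loads and `φ = 0`) or the proportional
allocation conditions hold. Flexible loads are indexed by `Fin nF` (via `Sum.inl`) and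
inflexible loads by `Fin nI` (via `Sum.inr`). -/
theorem stmt_10 (E gl a b : ℝ) (hE : 0 < E) (hgl : 0 < gl) (ha : 0 < a) (hb : 0 < b)
    (nF nI : ℕ) (hnF : 1 ≤ nF)
    (P0 : Fin nF ⊕ Fin nI → ℝ) (hP0 : ∀ i, 0 ≤ P0 i)
    (κ : Fin nF → ℝ) (hκ : ∀ i, 0 < κ i)
    (g : Fin nF ⊕ Fin nI → ℝ) (hg : ∀ i, 0 ≤ g i)
    (φ : ℝ) (ghat : Fin nF → ℝ) :
    ((∀ i : Fin nF,
        -(deltaP E gl P0 g (Sum.inl i)) - κ i * φ + b * (ghat i - g (Sum.inl i)) = 0) ∧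
     (∀ i : Fin nI, -(deltaP E gl P0 g (Sum.inr i)) = 0) ∧
     (∑ j, deltaP E gl P0 g j) *
        ((E * gl) ^ 2 * (gl - ∑ j, g j) / ((∑ j, g j) + gl) ^ 3) = 0 ∧
     (∀ i : Fin nF, -(a * (ghat i - g (Sum.inl i))) = 0))
    ↔
    ((∀ i : Fin nF, ghat i = g (Sum.inl i)) ∧
     (((∀ i, deltaP E gl P0 g i = 0) ∧ φ = 0) ∨
      ((∀ i : Fin nF, deltaP E gl P0 g (Sum.inl i) =
          (κ i / ∑ k, κ k) * (E ^ 2 * gl / 4 - ∑ j, P0 j)) ∧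
       (∀ i : Fin nI, deltaP E gl P0 g (Sum.inr i) = 0) ∧
       φ = ((∑ j, P0 j) - E ^ 2 * gl / 4) / (∑ k, κ k)))) := by
  have hS0 : 0 ≤ ∑ j, g j := Finset.sum_nonneg fun j _ => hg j
  have hsum : ∑ j, deltaP E gl P0 g j =
      (E * gl / ((∑ j, g j) + gl)) ^ 2 * (∑ j, g j) - ∑ j, P0 j := by
    simp only [deltaP, loadVoltage, Finset.sum_sub_distrib, Finset.mul_sum]
  have hsplit : ∑ j, deltaP E gl P0 g j =
      ∑ i, deltaP E gl P0 g (Sum.inl i) + ∑ i, deltaP E gl P0 g (Sum.inr i) :=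
    Fintype.sum_sum_type _
  have hK : 0 < ∑ k, κ k :=
    Finset.sum_pos (fun i _ => hκ i) ⟨⟨0, hnF⟩, Finset.mem_univ _⟩
  generalize hS : ∑ j, g j = S at *
  generalize hKK : ∑ k, κ k = K at *
  generalize hPP : ∑ j, P0 j = P at *
  have hSg : 0 < S + gl := by linarith
  constructor
  · rintro ⟨h1, h2, h3, h4⟩
    have hh : ∀ i : Fin nF, ghat i = g (Sum.inl i) := by
      intro i
      have h := h4 i
      rw [neg_eq_zero, mul_eq_zero] at h
      rcases h with h | h
      · exact absurd h ha.ne'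
      · linarith
    have hF : ∀ i : Fin nF, deltaP E gl P0 g (Sum.inl i) = κ i * (-φ) := by
      intro i
      have h := h1 i
      rw [hh i, sub_self, mul_zero] at h
      linarith
    have hI : ∀ i : Fin nI, deltaP E gl P0 g (Sum.inr i) = 0 := fun i =>
      neg_eq_zero.mp (h2 i)
    have hT : ∑ j, deltaP E gl P0 g j = K * (-φ) := by
      rw [hsplit]
      simp only [hF, hI, Finset.sum_const_zero, add_zero]
      rw [← Finset.sum_mul, hKK]
    refine ⟨hh, ?_⟩
    rcases mul_eq_zero.mp h3 with h | h
    · left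
      rw [hT] at h
      have hφ : φ = 0 := by
        rcases mul_eq_zero.mp h with h | h
        · exact absurd h hK.ne'
        · linarith
      refine ⟨?_, hφ⟩
      rintro (i | i)
      · rw [hF i, hφ]; ring
      · exact hI i
    · right
      have hgS : S = gl := by
        rw [div_eq_zero_iff] at h
        rcases h with h | h
        · rcases mul_eq_zero.mp h with h | h
          · exact absurd h (by positivity)
          · linarith
        · exact absurd h (by positivity)
      have hp : K * (-φ) = E ^ 2 * gl / 4 - P := by
        rw [← hT, hsum, hgS]
        field_simp
        ring
      refine ⟨?_, hI, ?_⟩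
      · intro i
        rw [hF i, ← hp]
        field_simp
      · rw [eq_div_iff hK.ne']
        linarith
  · rintro ⟨hh, h⟩
    have h4 : ∀ i : Fin nF, -(a * (ghat i - g (Sum.inl i))) = 0 := by
      intro i
      rw [hh i]; ring
    rcases h with ⟨h, hφ⟩ | ⟨hF, hI, hφ⟩
    · refine ⟨?_, ?_, ?_, h4⟩
      · intro i
        rw [h, hφ, hh i]; ring
      · intro i
        rw [h]; ring
      · simp [h]
    · refine ⟨?_, ?_, ?_, h4⟩
      · intro i
        rw [hF i, hφ, hh i]; ring
      · intro i
        rw [hI]; ring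
      · have hT : ∑ j, deltaP E gl P0 g j = E ^ 2 * gl / 4 - P := by
          rw [hsplit]
          simp only [hF, hI, Finset.sum_const_zero, add_zero]
          rw [← Finset.sum_mul, ← Finset.sum_div, hKK, div_self hK.ne', one_mul]
        have he : (E * gl / (S + gl)) ^ 2 * S = E ^ 2 * gl / 4 := by linarith
        have hq : E ^ 2 * gl * (S - gl) ^ 2 = 0 := by
          rw [div_pow, div_mul_eq_mul_div, div_eq_div_iff (by positivity) (by norm_num)] at he
          linear_combination -he
        have hgS : S = gl := by
          rcases mul_eq_zero.mp hq with h | h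
          · exact absurd h (by positivity)
          · have := pow_eq_zero_iff (two_ne_zero) |>.mp h
            linarith
        rw [hgS]; simp
end

section
/- (Proportional allocation equilibrium is unique and explicit) Let E>0, g_l>0, flexible loads F = {1,…,n_F} (n_F ≥ 1), inflexible loads I = {n_F+1,…,n}, demands P_{0,i} ≥ 0, κ_i > 0 for i ∈ F, κ̄ = Σ_{i∈F} κ_i, P̄₀ = Σᵢ P_{0,i}, P_max = E²·g_l/4, v(g) = E·g_l/(Σⱼ gⱼ + g_l), ΔPᵢ(g) = v(g)²·gᵢ − P_{0,i}. If g ∈ ℝⁿ_{≥0} satisfies ΔPᵢ(g) = (κᵢ/κ̄)·(P_max − P̄₀) for all i ∈ F and ΔPᵢ(g) = 0 for all i ∈ I, then necessarily Σⱼ gⱼ = g_l, v(g) = E/2, gᵢ = (4/E²)·(P_{0,i} + (κᵢ/κ̄)·(P_max − P̄₀)) for i ∈ F, and gᵢ = (4/E²)·P_{0,i} for i ∈ I. In particular, at most one such g exists. -/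
/-- The proportional allocation equilibrium is unique and explicit: if `g ∈ ℝⁿ_{≥0}` satisfies
`ΔPᵢ(g) = (κᵢ/κ̄)·(P_max − P̄₀)` for flexible `i` and `ΔPᵢ(g) = 0` for inflexible `i`, then
`Σⱼ gⱼ = g_l`, `v(g) = E/2`, and `g` is given by the explicit formulas (so at most one such
`g` exists). Flexible loads are indexed via `Sum.inl`, inflexible via `Sum.inr`. -/
theorem stmt_11 (E gl : ℝ) (hE : 0 < E) (hgl : 0 < gl)
    (nF nI : ℕ) (hnF : 1 ≤ nF)
    (P0 : Fin nF ⊕ Fin nI → ℝ) (hP0 : ∀ i, 0 ≤ P0 i)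
    (κ : Fin nF → ℝ) (hκ : ∀ i, 0 < κ i)
    (g : Fin nF ⊕ Fin nI → ℝ) (hg : ∀ i, 0 ≤ g i)
    (hF : ∀ i : Fin nF, deltaP E gl P0 g (Sum.inl i) =
      (κ i / ∑ k, κ k) * (E ^ 2 * gl / 4 - ∑ j, P0 j))
    (hI : ∀ i : Fin nI, deltaP E gl P0 g (Sum.inr i) = 0) :
    (∑ j, g j) = gl ∧
    loadVoltage E gl g = E / 2 ∧
    (∀ i : Fin nF, g (Sum.inl i) =
      (4 / E ^ 2) * (P0 (Sum.inl i) + (κ i / ∑ k, κ k) * (E ^ 2 * gl / 4 - ∑ j, P0 j))) ∧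
    (∀ i : Fin nI, g (Sum.inr i) = (4 / E ^ 2) * P0 (Sum.inr i)) := by
  have hκs : 0 < ∑ k, κ k :=
    Finset.sum_pos (fun i _ => hκ i) ⟨⟨0, hnF⟩, Finset.mem_univ _⟩
  have hS : 0 ≤ ∑ j, g j := Finset.sum_nonneg (fun i _ => hg i)
  have hsum : ∑ j, deltaP E gl P0 g j = E ^ 2 * gl / 4 - ∑ j, P0 j := by
    rw [Fintype.sum_sum_type (fun j => deltaP E gl P0 g j)]
    simp only [hF, hI, Finset.sum_const_zero, add_zero]
    rw [← Finset.sum_mul, ← Finset.sum_div, div_self hκs.ne', one_mul]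
  have hsum2 : ∑ j, deltaP E gl P0 g j
      = (loadVoltage E gl g) ^ 2 * (∑ j, g j) - ∑ j, P0 j := by
    simp only [deltaP]
    rw [Finset.sum_sub_distrib, ← Finset.mul_sum]
  have key : (loadVoltage E gl g) ^ 2 * (∑ j, g j) = E ^ 2 * gl / 4 := by linarith
  have hSg : (∑ j, g j) = gl := by
    unfold loadVoltage at key
    generalize (∑ j, g j) = S at key hS
    have hd : 0 < S + gl := by linarith
    field_simp at key
    have h2 : (S - gl) ^ 2 = 0 := by
      nlinarith [key]
    have := pow_eq_zero_iff (two_ne_zero) |>.mp h2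
    linarith
  have hv : loadVoltage E gl g = E / 2 := by
    unfold loadVoltage
    rw [hSg]
    field_simp
    ring
  refine ⟨hSg, hv, fun i => ?_, fun i => ?_⟩
  · rw [← hF i, deltaP, hv]
    field_simp
    ring
  · have h := hI i
    rw [deltaP, hv] at h
    have : P0 (Sum.inr i) = (E / 2) ^ 2 * g (Sum.inr i) := by linarith
    rw [this]
    field_simp
    try ring
end

section
/- (Eigenpairs of the VCS Jacobian from the flexible-load quadratic) Let E>0, g_l>0, n_F ≥ 2, n_I ≥ 0, a>0, b>0, κ_i>0 for i ∈ F, demands P_{0,i}, and g ∈ ℝⁿ_{≥0} with ḡ = Σᵢ gᵢ and v = E·g_l/(ḡ+g_l). Let λ ∈ ℝ be any root of λ² + (a + b + v²)·λ + a·v² = 0 (this quadratic has two distinct real roots since its discriminant equals (a−v²)² + b² + 2ab + 2bv² > 0, and neither root equals −a). Then for any two distinct flexible indices i, j ∈ F, the nonzero vector u = (u_F, u_I, u_φ, û) with u_F = e_i − e_j, u_I = 0, u_φ = 0, û = (a/(λ+a))·(e_i − e_j) satisfies J_SC(g)·u = λ·u; i.e., each root of the quadratic is an eigenvalue of J_SC(g)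 with the stated eigenvector. -/
/-- The VCS Jacobian `J_SC(g)` as a matrix on the index type
`(Fin nF ⊕ Fin nI) ⊕ (Unit ⊕ Fin nF)`: the first block indexes the load conductances
(flexible then inflexible), `Unit` indexes the shared state `φ`, and the last block the
controller states `ĝ`. Here `ḡ = Σⱼ gⱼ`, `v = E·g_l/(ḡ+g_l)`, `ΔP̄ = v²·ḡ − Σⱼ P₀ⱼ`, and
`c = (v²·(g_l−ḡ)/(ḡ+g_l))² + ΔP̄·2v²·(ḡ−2g_l)/(ḡ+g_l)²`. -/
noncomputable def JSC (E gl a b : ℝ) {nF nI : ℕ}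
    (P0 : Fin nF ⊕ Fin nI → ℝ) (κ : Fin nF → ℝ) (g : Fin nF ⊕ Fin nI → ℝ) :
    Matrix ((Fin nF ⊕ Fin nI) ⊕ (Unit ⊕ Fin nF))
           ((Fin nF ⊕ Fin nI) ⊕ (Unit ⊕ Fin nF)) ℝ :=
  let gbar : ℝ := ∑ j, g j
  let v : ℝ := E * gl / (gbar + gl)
  let c : ℝ := (v ^ 2 * (gl - gbar) / (gbar + gl)) ^ 2 +
    (v ^ 2 * gbar - ∑ j, P0 j) * (2 * v ^ 2 * (gbar - 2 * gl) / (gbar + gl) ^ 2)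
  fun p q =>
    match p, q with
    | Sum.inl i, Sum.inl j =>
        (2 * v ^ 2 / (gbar + gl)) * g i +
          (match i, j with
           | Sum.inl i', Sum.inl j' => if i' = j' then -(v ^ 2 + b) else 0
           | Sum.inr i', Sum.inr j' => if i' = j' then -(v ^ 2) else 0
           | _, _ => 0)
    | Sum.inl (Sum.inl i'), Sum.inr (Sum.inl _) => -κ i'
    | Sum.inl (Sum.inr _), Sum.inr (Sum.inl _) => 0
    | Sum.inl (Sum.inl i'), Sum.inr (Sum.inr j') => if i' = j' then b else 0
    | Sum.inl (Sum.inr _), Sum.inr (Sum.inr _) => 0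
    | Sum.inr (Sum.inl _), Sum.inl _ => c
    | Sum.inr (Sum.inl _), Sum.inr _ => 0
    | Sum.inr (Sum.inr i'), Sum.inl (Sum.inl j') => if i' = j' then a else 0
    | Sum.inr (Sum.inr _), Sum.inl (Sum.inr _) => 0
    | Sum.inr (Sum.inr i'), Sum.inr (Sum.inr j') => if i' = j' then -a else 0
    | Sum.inr (Sum.inr _), Sum.inr (Sum.inl _) => 0

/-- Eigenpairs of the VCS Jacobian from the flexible-load quadratic: any root `λ` of
`λ² + (a+b+v²)·λ + a·v² = 0` (which has two distinct real roots, since its discriminant is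
positive, neither equal to `−a`) is an eigenvalue of `J_SC(g)` with eigenvector
`u = (eᵢ − eⱼ, 0, 0, (a/(λ+a))·(eᵢ − eⱼ))` for any distinct flexible indices `i ≠ j`. -/
theorem stmt_12 (E gl a b : ℝ) (hE : 0 < E) (hgl : 0 < gl) (ha : 0 < a) (hb : 0 < b)
    (nF nI : ℕ) (hnF : 2 ≤ nF)
    (P0 : Fin nF ⊕ Fin nI → ℝ)
    (κ : Fin nF → ℝ) (hκ : ∀ i, 0 < κ i)
    (g : Fin nF ⊕ Fin nI → ℝ) (hg : ∀ i, 0 ≤ g i)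
    (lam : ℝ)
    (hlam : lam ^ 2 + (a + b + (E * gl / ((∑ j, g j) + gl)) ^ 2) * lam +
      a * (E * gl / ((∑ j, g j) + gl)) ^ 2 = 0)
    (i j : Fin nF) (hij : i ≠ j) :
    0 < (a + b + (E * gl / ((∑ j, g j) + gl)) ^ 2) ^ 2 -
        4 * a * (E * gl / ((∑ j, g j) + gl)) ^ 2 ∧
    lam ≠ -a ∧
    (∀ u : ((Fin nF ⊕ Fin nI) ⊕ (Unit ⊕ Fin nF)) → ℝ,
      u = Sum.elim (Sum.elim (Pi.single i 1 - Pi.single j 1) (0 : Fin nI → ℝ))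
            (Sum.elim (0 : Unit → ℝ) ((a / (lam + a)) • (Pi.single i 1 - Pi.single j 1))) →
      u ≠ 0 ∧ (JSC E gl a b P0 κ g).mulVec u = lam • u) := by
  have hne : lam ≠ -a := by
    rintro rfl
    have : a * b = 0 := by linarith
    exact (mul_pos ha hb).ne' this
  have hla : lam + a ≠ 0 := fun h => hne (by linarith)
  refine ⟨?_, hne, ?_⟩
  · generalize E * gl / ((∑ j, g j) + gl) = v
    nlinarith [sq_nonneg (a - v ^ 2), mul_pos ha hb, mul_nonneg hb.le (sq_nonneg v),
      mul_pos hb hb]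
  · intro u hu
    have hd : ∑ k, (Pi.single i 1 - Pi.single j 1 : Fin nF → ℝ) k = 0 := by
      simp [Finset.sum_sub_distrib]
    have hdi : (Pi.single i 1 - Pi.single j 1 : Fin nF → ℝ) i = 1 := by
      simp [hij]
    generalize (Pi.single i 1 - Pi.single j 1 : Fin nF → ℝ) = d at hu hd hdi
    subst hu
    refine ⟨?_, ?_⟩
    · intro h
      have := congrFun h (Sum.inl (Sum.inl i))
      simp [hdi] at this
    · have key : -((E * gl / ((∑ j, g j) + gl)) ^ 2 + b) + b * (a / (lam + a)) = lam := by
        generalize E * gl / ((∑ j, g j) + gl) = v at hlam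
        field_simp
        linarith
      have key2 : a - a * (a / (lam + a)) = lam * (a / (lam + a)) := by
        field_simp
        ring
      funext p
      rcases p with (k | k) | (k | k)
      · simp only [Matrix.mulVec, dotProduct, Fintype.sum_sum_type, JSC, Sum.elim_inl,
          Sum.elim_inr, Pi.smul_apply, Pi.zero_apply, smul_eq_mul, mul_zero,
          Finset.sum_const_zero, add_mul, Finset.sum_add_distrib, ← Finset.mul_sum, hd, ite_mul,
          zero_mul, Finset.sum_ite_eq, Finset.mem_univ, if_true]
        rw [Fintype.sum_sum_type] at key
        linear_combination d k * key
      · simp only [Matrix.mulVec, dotProduct, Fintype.sum_sum_type, JSC, Sum.elim_inl,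
          Sum.elim_inr, Pi.smul_apply, Pi.zero_apply, smul_eq_mul, mul_zero, add_zero,
          Finset.sum_const_zero, ← Finset.mul_sum, hd, zero_mul]
      · simp only [Matrix.mulVec, dotProduct, Fintype.sum_sum_type, JSC, Sum.elim_inl,
          Sum.elim_inr, Pi.smul_apply, Pi.zero_apply, smul_eq_mul, mul_zero, add_zero,
          Finset.sum_const_zero, ← Finset.mul_sum, hd, zero_mul]
      · simp only [Matrix.mulVec, dotProduct, Fintype.sum_sum_type, JSC, Sum.elim_inl,
          Sum.elim_inr, Pi.smul_apply, Pi.zero_apply, smul_eq_mul, mul_zero,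
          Finset.sum_const_zero, ite_mul,
          zero_mul, Finset.sum_ite_eq, Finset.mem_univ, if_true]
        linear_combination d k * key2
end

section
/- (−v² is an eigenvalue of the VCS Jacobian) Let E>0, g_l>0, n_F ≥ 1, n_I ≥ 2, a>0, b>0, κ_i>0 for i ∈ F, demands P_{0,i}, and g ∈ ℝⁿ_{≥0} with ḡ = Σᵢ gᵢ and v = E·g_l/(ḡ+g_l). Then for any two distinct inflexible indices i, j ∈ I, the nonzero vector u = (u_F, u_I, u_φ, û) with u_F = 0, u_I = e_i − e_j, u_φ = 0, û = 0 satisfies J_SC(g)·u = −v²·u; i.e., −v² is an eigenvalue of J_SC(g) with eigenspace containing the (n_I − 1)-dimensional space of inflexible difference vectors. -/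
/-- `−v²` is an eigenvalue of the VCS Jacobian: for any two distinct inflexible indices
`i ≠ j`, the nonzero vector `u = (0, eᵢ − eⱼ, 0, 0)` satisfies `J_SC(g)·u = −v²·u`; hence
the eigenspace of `−v²` contains the `(n_I − 1)`-dimensional space of inflexible difference
vectors. -/
theorem stmt_13 (E gl a b : ℝ) (hE : 0 < E) (hgl : 0 < gl) (ha : 0 < a) (hb : 0 < b)
    (nF nI : ℕ) (hnF : 1 ≤ nF) (hnI : 2 ≤ nI)
    (P0 : Fin nF ⊕ Fin nI → ℝ)
    (κ : Fin nF → ℝ) (hκ : ∀ i, 0 < κ i)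
    (g : Fin nF ⊕ Fin nI → ℝ) (hg : ∀ i, 0 ≤ g i)
    (i j : Fin nI) (hij : i ≠ j) :
    ∀ u : ((Fin nF ⊕ Fin nI) ⊕ (Unit ⊕ Fin nF)) → ℝ,
      u = Sum.elim (Sum.elim (0 : Fin nF → ℝ) (Pi.single i 1 - Pi.single j 1))
            (Sum.elim (0 : Unit → ℝ) (0 : Fin nF → ℝ)) →
      u ≠ 0 ∧
      (JSC E gl a b P0 κ g).mulVec u =
        (-(E * gl / ((∑ k, g k) + gl)) ^ 2) • u := by
  intro u hu
  subst hu
  constructor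
  · intro h
    have h1 := congrFun h (Sum.inl (Sum.inr i))
    simp [Pi.single_apply, hij] at h1
  · funext p
    rcases p with (p | p) | (p | p) <;>
      simp [Matrix.mulVec, dotProduct, JSC, Fintype.sum_sum_type, mul_sub, add_mul,
        Finset.sum_sub_distrib, Finset.sum_add_distrib, Pi.single_apply]
end

section
/- (Stability of the VCS Controller in the overload regime) Let E>0, g_l>0, flexible loads F = {1,…,n_F} (n_F ≥ 1), inflexible loads I = {n_F+1,…,n} nonempty with P_{0,j} > 0 for all j ∈ I, P_{0,i} ≥ 0 for i ∈ F, κ_i > 0 for i ∈ F with κ̄ = Σ_{i∈F} κ_i, and b > 0. Suppose P̄₀ = Σᵢ P_{0,i} > P_max = E²·g_l/4, and let g* ∈ ℝⁿ be the proportional allocation equilibrium: g*ᵢ = (4/E²)·(P_{0,i} + (κᵢ/κ̄)·(P_max − P̄₀)) for i ∈ F and g*ᵢ = (4/E²)·P_{0,i} for i ∈ I; assume g*ᵢ ≥ 0 for all i ∈ F (so Σᵢ g*ᵢ = g_l and v(g*) = E/2). Then there exists a₀ > 0 such that for every a ∈ (0, a₀), all eigenvalues of the VCS Jacobian J_SC(g*)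 (with parameters a, b, κ) have negative real part; i.e., the proportional allocation equilibrium is locally asymptotically stable. -/
lemma quad_ne (p q : ℝ) (hp : 0 < p) (hq : 0 < q) (z : ℂ) (hz : 0 ≤ z.re) :
    z ^ 2 + p * z + q ≠ 0 := by
  intro h
  have h1 := congrArg Complex.re h
  have h2 := congrArg Complex.im h
  simp [pow_two] at h1 h2
  have h3 : z.im * (2 * z.re + p) = 0 := by linarith
  rcases mul_eq_zero.1 h3 with h4 | h4
  · rw [h4] at h1
    nlinarith [mul_nonneg hp.le hz, mul_nonneg hz hz]
  · linarith

lemma quartic_ne (p1 p2 p3 p4 : ℝ) (h1 : 0 < p1) (h2 : 0 < p2) (h3 : 0 < p3) (h4 : 0 < p4)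
    (hd : p3 ^ 2 + p1 ^ 2 * p4 < p1 * p2 * p3) (z : ℂ) (hz : 0 ≤ z.re) :
    z ^ 4 + p1 * z ^ 3 + p2 * z ^ 2 + p3 * z + p4 ≠ 0 := by
  intro h
  obtain ⟨x, y⟩ := z
  simp only at hz
  by_cases hy : y = 0
  · subst hy
    have h' : ((x ^ 4 + p1 * x ^ 3 + p2 * x ^ 2 + p3 * x + p4 : ℝ) : ℂ) = 0 := by
      push_cast
      exact h
    have h'' : x ^ 4 + p1 * x ^ 3 + p2 * x ^ 2 + p3 * x + p4 = 0 := by exact_mod_cast h'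
    have : 0 < x ^ 4 + p1 * x ^ 3 + p2 * x ^ 2 + p3 * x + p4 := by positivity
    linarith
  · obtain ⟨m, hm⟩ : ∃ m, m = 2 * x := ⟨_, rfl⟩
    obtain ⟨n, hn⟩ : ∃ n, n = x ^ 2 + y ^ 2 := ⟨_, rfl⟩
    obtain ⟨r, hr⟩ : ∃ r, r = p1 + m := ⟨_, rfl⟩
    obtain ⟨q, hq⟩ : ∃ q, q = p2 + m * r - n := ⟨_, rfl⟩
    have hz2 : (⟨x, y⟩ : ℂ) ^ 2 - m * ⟨x, y⟩ + n = 0 := by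
      apply Complex.ext
      · simp [pow_two, hm, hn]; ring
      · simp [pow_two, hm, hn]; ring
    have hl : ((p3 - (r * n - m * q) : ℝ) : ℂ) * ⟨x, y⟩ + ((p4 - n * q : ℝ) : ℂ) = 0 := by
      have hq' : (q : ℂ) = p2 + m * r - n := by rw [hq]; push_cast; ring
      have hr' : (r : ℂ) = p1 + m := by rw [hr]; push_cast; ring
      generalize (⟨x, y⟩ : ℂ) = z at *
      push_cast
      have hp2 : (p2 : ℂ) = q - m * r + n := by rw [hq']; ring
      have hp1 : (p1 : ℂ) = r - m := by rw [hr']; ring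
      rw [hp1, hp2] at h
      linear_combination h - (z ^ 2 + r * z + q) * hz2
    have him := congrArg Complex.im hl
    have hre := congrArg Complex.re hl
    have e3 : p3 - (r * n - m * q) = 0 := by
      have : (p3 - (r * n - m * q)) * y = 0 := by
        simpa [-Complex.ofReal_sub, -Complex.ofReal_mul] using him
      exact (mul_eq_zero.1 this).resolve_right hy
    have e4 : p4 - n * q = 0 := by
      rw [e3] at hre
      simpa [-Complex.ofReal_sub, -Complex.ofReal_mul] using hre
    have hm0 : 0 ≤ m := by linarith
    have hr0 : 0 < r := by linarith
    have key : p1 * p2 * p3 - p3 ^ 2 - p1 ^ 2 * p4 = - (m * r * ((n - q) ^ 2 + p1 * p3)) := by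
      have a1 : p1 = r - m := by linarith
      have a2 : p2 = q - m * r + n := by linarith
      have a3 : p3 = r * n - m * q := by linarith
      have a4 : p4 = n * q := by linarith
      rw [a1, a2, a3, a4]; ring
    have : 0 ≤ m * r * ((n - q) ^ 2 + p1 * p3) := by positivity
    linarith

/-- The reduced linear-algebra core. -/
lemma core (V b a c gF gI : ℝ) (hV : 0 < V) (hb : 0 < b) (ha : 0 < a) (hc : 0 < c)
    (nF nI : ℕ) (γF : Fin nF → ℝ) (γI : Fin nI → ℝ) (κ : Fin nF → ℝ)
    (hgF : ∑ i, γF i = gF) (hgI : ∑ i, γI i = gI) (hsum : gF + gI = 1) (hgF0 : 0 ≤ gF)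
    (hK : 0 < ∑ i, κ i) (hsmall : a * (a + V + b) < (∑ i, κ i) * c)
    (μ : ℂ) (hμ : 0 ≤ μ.re) (u w : Fin nF → ℂ) (t : Fin nI → ℂ) (φ S : ℂ)
    (hS : S = ∑ i, u i + ∑ i, t i)
    (e1 : ∀ i, V * γF i * S - (V + b) * u i - κ i * φ + b * w i = μ * u i)
    (e2 : ∀ i, V * γI i * S - V * t i = μ * t i)
    (e3 : c * S = μ * φ)
    (e4 : ∀ i, a * (u i - w i) = μ * w i) :
    (∀ i, u i = 0) ∧ (∀ i, t i = 0) ∧ φ = 0 ∧ (∀ i, w i = 0) := by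
  obtain ⟨k, hk⟩ : ∃ k, k = ∑ i, κ i := ⟨_, rfl⟩
  rw [← hk] at hK hsmall
  have s1 : V * gF * S - (V + b) * (∑ i, u i) - k * φ + b * (∑ i, w i) = μ * ∑ i, u i := by
    have := Finset.sum_congr rfl (fun i (_ : i ∈ Finset.univ) => e1 i)
    simp only [Finset.sum_add_distrib, Finset.sum_sub_distrib, ← Finset.mul_sum,
      ← Finset.sum_mul] at this
    rw [hk, ← hgF]; push_cast; exact this
  have s2 : V * gI * S - V * (∑ i, t i) = μ * ∑ i, t i := by
    have := Finset.sum_congr rfl (fun i (_ : i ∈ Finset.univ) => e2 i)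
    simp only [Finset.sum_sub_distrib, ← Finset.mul_sum, ← Finset.sum_mul] at this
    rw [← hgI]; push_cast; exact this
  have s4 : a * ((∑ i, u i) - ∑ i, w i) = μ * ∑ i, w i := by
    have := Finset.sum_congr rfl (fun i (_ : i ∈ Finset.univ) => e4 i)
    simpa only [Finset.sum_sub_distrib, ← Finset.mul_sum] using this
  obtain ⟨U, hU⟩ : ∃ U, U = ∑ i, u i := ⟨_, rfl⟩
  obtain ⟨W, hW⟩ : ∃ W, W = ∑ i, w i := ⟨_, rfl⟩
  obtain ⟨T, hT⟩ : ∃ T, T = ∑ i, t i := ⟨_, rfl⟩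
  rw [← hU] at s1 s4 hS
  rw [← hW] at s1 s4
  rw [← hT] at s2 hS
  have hg1 : (gI : ℂ) = 1 - gF := by
    have : gI = 1 - gF := by linarith
    rw [this]; push_cast; ring
  have hT' : T = S - U := by rw [hS]; ring
  rw [hg1, hT'] at s2
  have hμa : μ + a ≠ 0 := by
    intro h
    have := congrArg Complex.re h
    simp at this; linarith
  have hμV : μ + V ≠ 0 := by
    intro h
    have := congrArg Complex.re h
    simp at this; linarith
  have hkc : 0 < k * c := by positivity
  have hq := quartic_ne (a + V + b) (a * V + k * c + b * (V * gF)) (k * c * (a + V)) (k * c * a * V)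
    (by positivity) (by positivity) (by positivity) (by positivity)
    (by
      have h0 : 0 ≤ (a + V + b) * (b * (V * gF)) * (k * c * (a + V)) := by positivity
      have h1 : 0 < (k * c) * b * V * (k * c - a * (a + V + b)) := by
        have : 0 < k * c - a * (a + V + b) := by linarith
        positivity
      have h2 : 0 < (k * c) * b * (k * c * a) := by positivity
      nlinarith [h0, h1, h2]) μ hμ
  have hS0 : S = 0 := by
    have hsum0 : μ * S + k * φ + b * (U - W) = 0 := by
      linear_combination -s1 - s2
    have hd : (μ + a) * (U - W) = μ * U := by linear_combination s4
    have hUe : (μ + V) * U = (μ + V * gF) * S := by linear_combination s2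
    have : (μ ^ 4 + ((a + V + b : ℝ) : ℂ) * μ ^ 3 + ((a * V + k * c + b * (V * gF) : ℝ) : ℂ) * μ ^ 2
      + ((k * c * (a + V) : ℝ) : ℂ) * μ + ((k * c * a * V : ℝ) : ℂ)) * S = 0 := by
      push_cast
      linear_combination μ * (μ + a) * (μ + V) * hsum0 + k * (μ + a) * (μ + V) * e3
        - b * μ * (μ + V) * hd - b * μ ^ 2 * hUe
    exact (mul_eq_zero.1 this).resolve_left hq
  have ht : ∀ i, t i = 0 := by
    intro i
    have := e2 i
    rw [hS0] at this
    have h' : (μ + V) * t i = 0 := by linear_combination -this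
    exact (mul_eq_zero.1 h').resolve_left hμV
  have hU0 : U = 0 := by
    have : T = 0 := by rw [hT]; simp [ht]
    rw [hS0] at hT'
    rw [this] at hT'
    linear_combination hT'
  have hW0 : W = 0 := by
    rw [hU0] at s4
    have h' : (μ + a) * W = 0 := by linear_combination -s4
    exact (mul_eq_zero.1 h').resolve_left hμa
  have hφ : φ = 0 := by
    rw [hU0, hW0, hS0] at s1
    have h' : (k : ℂ) * φ = 0 := by linear_combination -s1
    exact (mul_eq_zero.1 h').resolve_left (by exact_mod_cast hK.ne')
  have hu : ∀ i, u i = 0 := by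
    intro i
    have h1 := e1 i
    have h4 := e4 i
    rw [hS0, hφ] at h1
    have hqd := quad_ne (a + V + b) (a * V) (by positivity) (by positivity) μ hμ
    have h' : (μ ^ 2 + ((a + V + b : ℝ) : ℂ) * μ + ((a * V : ℝ) : ℂ)) * u i = 0 := by
      push_cast
      linear_combination -(μ + a) * h1 - b * h4
    exact (mul_eq_zero.1 h').resolve_left hqd
  refine ⟨hu, ht, hφ, fun i => ?_⟩
  have h4 := e4 i
  rw [hu i] at h4
  have h' : (μ + a) * w i = 0 := by linear_combination -h4
  exact (mul_eq_zero.1 h').resolve_left hμa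

/-- Stability of the VCS controller in the overload regime: when total demand exceeds the
network capacity `E²·g_l/4`, at the proportional allocation equilibrium `g*` there exists
`a₀ > 0` such that for all `a ∈ (0, a₀)` every eigenvalue of the VCS Jacobian `J_SC(g*)`
has negative real part, i.e. the equilibrium is locally asymptotically stable. -/
theorem stmt_14 (E gl b : ℝ) (hE : 0 < E) (hgl : 0 < gl) (hb : 0 < b)
    (nF nI : ℕ) (hnF : 1 ≤ nF) (hnI : 1 ≤ nI)
    (P0 : Fin nF ⊕ Fin nI → ℝ)
    (hP0F : ∀ i : Fin nF, 0 ≤ P0 (Sum.inl i))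
    (hP0I : ∀ i : Fin nI, 0 < P0 (Sum.inr i))
    (κ : Fin nF → ℝ) (hκ : ∀ i, 0 < κ i)
    (hover : E ^ 2 * gl / 4 < ∑ j, P0 j)
    (g : Fin nF ⊕ Fin nI → ℝ)
    (hgdef : g = Sum.elim
      (fun i => (4 / E ^ 2) *
        (P0 (Sum.inl i) + (κ i / ∑ k, κ k) * (E ^ 2 * gl / 4 - ∑ j, P0 j)))
      (fun i => (4 / E ^ 2) * P0 (Sum.inr i)))
    (hgF : ∀ i : Fin nF, 0 ≤ g (Sum.inl i)) :
    ∃ a₀ > 0, ∀ a : ℝ, 0 < a → a < a₀ →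
      ∀ μ ∈ spectrum ℂ ((JSC E gl a b P0 κ g).map (Complex.ofReal : ℝ → ℂ)),
        μ.re < 0 := by
  have hK : 0 < ∑ k, κ k :=
    Finset.sum_pos (fun i _ => hκ i) ⟨⟨0, hnF⟩, Finset.mem_univ _⟩
  have hgsum : ∑ j, g j = gl := by
    rw [hgdef, Fintype.sum_sum_type]
    simp only [Sum.elim_inl, Sum.elim_inr, ← Finset.mul_sum, Finset.sum_add_distrib,
      ← Finset.sum_mul, ← Finset.sum_div]
    rw [Fintype.sum_sum_type]
    field_simp
    ring
  obtain ⟨V, hVd⟩ : ∃ V, V = E ^ 2 / 4 := ⟨_, rfl⟩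
  have hV : 0 < V := by rw [hVd]; positivity
  obtain ⟨c, hcd⟩ : ∃ c, c = (∑ j, P0 j - E ^ 2 * gl / 4) * V / (2 * gl) := ⟨_, rfl⟩
  have hc : 0 < c := by
    have : 0 < ∑ j, P0 j - E ^ 2 * gl / 4 := by linarith
    rw [hcd]; positivity
  have hv2 : (E * gl / (gl + gl)) ^ 2 = V := by rw [hVd]; field_simp; norm_num
  have hcJ : (V * (gl - gl) / (gl + gl)) ^ 2 +
      (V * gl - ∑ j, P0 j) * (2 * V * (gl - 2 * gl) / (gl + gl) ^ 2) = c := by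
    rw [hcd, hVd]; field_simp; ring
  have hcoef : ∀ x, 2 * V / (gl + gl) * x = V * (x / gl) := by
    intro x; field_simp; ring
  refine ⟨min 1 ((∑ k, κ k) * c / (1 + V + b)), by positivity, ?_⟩
  intro a ha ha0 μ hmem
  have ha1 : a < 1 := lt_of_lt_of_le ha0 (min_le_left _ _)
  have ha2 : a < (∑ k, κ k) * c / (1 + V + b) := lt_of_lt_of_le ha0 (min_le_right _ _)
  have hsmall : a * (a + V + b) < (∑ k, κ k) * c := by
    rw [lt_div_iff₀ (by positivity)] at ha2
    nlinarith
  by_contra hneg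
  have hμ : 0 ≤ μ.re := not_lt.1 hneg
  rw [← Matrix.spectrum_toLin', ← Module.End.hasEigenvalue_iff_mem_spectrum] at hmem
  obtain ⟨x, hx⟩ := hmem.exists_hasEigenvector
  have hxe := hx.apply_eq_smul
  rw [Matrix.toLin'_apply] at hxe
  have hrow := fun p => congrFun hxe p
  have m11 : ∀ (i : Fin nF) (j : Fin nF), JSC E gl a b P0 κ g (Sum.inl (Sum.inl i)) (Sum.inl (Sum.inl j)) = V * (g (Sum.inl i) / gl) + (if i = j then -(V + b) else 0) := by
    intro i j
    simp only [JSC, hgsum, hv2, hcJ, hcoef, add_zero]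
  have m12 : ∀ (i : Fin nF) (j : Fin nI), JSC E gl a b P0 κ g (Sum.inl (Sum.inl i)) (Sum.inl (Sum.inr j)) = V * (g (Sum.inl i) / gl) := by
    intro i j
    simp only [JSC, hgsum, hv2, hcJ, hcoef, add_zero]
  have m13 : ∀ (i : Fin nF), JSC E gl a b P0 κ g (Sum.inl (Sum.inl i)) (Sum.inr (Sum.inl ())) = -κ i := by
    intro i
    simp only [JSC, hgsum, hv2, hcJ, hcoef, add_zero]
  have m14 : ∀ (i : Fin nF) (j : Fin nF), JSC E gl a b P0 κ g (Sum.inl (Sum.inl i)) (Sum.inr (Sum.inr j)) = if i = j then b else 0 := by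
    intro i j
    simp only [JSC, hgsum, hv2, hcJ, hcoef, add_zero]
  have m21 : ∀ (i : Fin nI) (j : Fin nF), JSC E gl a b P0 κ g (Sum.inl (Sum.inr i)) (Sum.inl (Sum.inl j)) = V * (g (Sum.inr i) / gl) := by
    intro i j
    simp only [JSC, hgsum, hv2, hcJ, hcoef, add_zero]
  have m22 : ∀ (i : Fin nI) (j : Fin nI), JSC E gl a b P0 κ g (Sum.inl (Sum.inr i)) (Sum.inl (Sum.inr j)) = V * (g (Sum.inr i) / gl) + (if i = j then -V else 0) := by
    intro i j
    simp only [JSC, hgsum, hv2, hcJ, hcoef, add_zero]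
  have m23 : ∀ (i : Fin nI), JSC E gl a b P0 κ g (Sum.inl (Sum.inr i)) (Sum.inr (Sum.inl ())) = 0 := by
    intro i
    simp only [JSC, hgsum, hv2, hcJ, hcoef, add_zero]
  have m24 : ∀ (i : Fin nI) (j : Fin nF), JSC E gl a b P0 κ g (Sum.inl (Sum.inr i)) (Sum.inr (Sum.inr j)) = 0 := by
    intro i j
    simp only [JSC, hgsum, hv2, hcJ, hcoef, add_zero]
  have m31 : ∀ (j : Fin nF), JSC E gl a b P0 κ g (Sum.inr (Sum.inl ())) (Sum.inl (Sum.inl j)) = c := by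
    intro j
    simp only [JSC, hgsum, hv2, hcJ, hcoef, add_zero]
  have m32 : ∀ (j : Fin nI), JSC E gl a b P0 κ g (Sum.inr (Sum.inl ())) (Sum.inl (Sum.inr j)) = c := by
    intro j
    simp only [JSC, hgsum, hv2, hcJ, hcoef, add_zero]
  have m33 : JSC E gl a b P0 κ g (Sum.inr (Sum.inl ())) (Sum.inr (Sum.inl ())) = 0 := by
    simp only [JSC, hgsum, hv2, hcJ, hcoef, add_zero]
  have m34 : ∀ (j : Fin nF), JSC E gl a b P0 κ g (Sum.inr (Sum.inl ())) (Sum.inr (Sum.inr j)) = 0 := by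
    intro j
    simp only [JSC, hgsum, hv2, hcJ, hcoef, add_zero]
  have m41 : ∀ (i : Fin nF) (j : Fin nF), JSC E gl a b P0 κ g (Sum.inr (Sum.inr i)) (Sum.inl (Sum.inl j)) = if i = j then a else 0 := by
    intro i j
    simp only [JSC, hgsum, hv2, hcJ, hcoef, add_zero]
  have m42 : ∀ (i : Fin nF) (j : Fin nI), JSC E gl a b P0 κ g (Sum.inr (Sum.inr i)) (Sum.inl (Sum.inr j)) = 0 := by
    intro i j
    simp only [JSC, hgsum, hv2, hcJ, hcoef, add_zero]
  have m43 : ∀ (i : Fin nF), JSC E gl a b P0 κ g (Sum.inr (Sum.inr i)) (Sum.inr (Sum.inl ())) = 0 := by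
    intro i
    simp only [JSC, hgsum, hv2, hcJ, hcoef, add_zero]
  have m44 : ∀ (i : Fin nF) (j : Fin nF), JSC E gl a b P0 κ g (Sum.inr (Sum.inr i)) (Sum.inr (Sum.inr j)) = if i = j then -a else 0 := by
    intro i j
    simp only [JSC, hgsum, hv2, hcJ, hcoef, add_zero]
  have hcore := core V b a c (∑ i, g (Sum.inl i) / gl) (∑ i, g (Sum.inr i) / gl) hV hb ha hc nF nI
    (fun i => g (Sum.inl i) / gl) (fun i => g (Sum.inr i) / gl) κ rfl rfl
    (by
      rw [← Finset.sum_div, ← Finset.sum_div, ← add_div, ← Fintype.sum_sum_type, hgsum]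
      field_simp)
    (Finset.sum_nonneg fun i _ => div_nonneg (hgF i) hgl.le) hK hsmall μ hμ
    (fun i => x (Sum.inl (Sum.inl i))) (fun i => x (Sum.inr (Sum.inr i)))
    (fun i => x (Sum.inl (Sum.inr i))) (x (Sum.inr (Sum.inl ())))
    (∑ i, x (Sum.inl (Sum.inl i)) + ∑ i, x (Sum.inl (Sum.inr i))) rfl
    (by
      intro i
      have h := hrow (Sum.inl (Sum.inl i))
      simp only [Matrix.mulVec, dotProduct, Matrix.map_apply, Fintype.sum_sum_type, Finset.univ_unique,
        Finset.sum_singleton, PUnit.default_eq_unit, m11, m12, m13, m14, m21, m22, m23, m24, m31, m32, m33, m34, m41, m42, m43, m44] at h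
      simp [add_mul, Finset.sum_add_distrib, ← Finset.mul_sum, apply_ite Complex.ofReal, ite_mul] at h
      push_cast
      linear_combination h)
    (by
      intro i
      have h := hrow (Sum.inl (Sum.inr i))
      simp only [Matrix.mulVec, dotProduct, Matrix.map_apply, Fintype.sum_sum_type, Finset.univ_unique,
        Finset.sum_singleton, PUnit.default_eq_unit, m11, m12, m13, m14, m21, m22, m23, m24, m31, m32, m33, m34, m41, m42, m43, m44] at h
      simp [add_mul, Finset.sum_add_distrib, ← Finset.mul_sum, apply_ite Complex.ofReal, ite_mul] at h
      push_cast
      linear_combination h)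
    (by
      have h := hrow (Sum.inr (Sum.inl ()))
      simp only [Matrix.mulVec, dotProduct, Matrix.map_apply, Fintype.sum_sum_type, Finset.univ_unique,
        Finset.sum_singleton, PUnit.default_eq_unit, m11, m12, m13, m14, m21, m22, m23, m24, m31, m32, m33, m34, m41, m42, m43, m44] at h
      simp [← Finset.mul_sum] at h
      linear_combination h)
    (by
      intro i
      have h := hrow (Sum.inr (Sum.inr i))
      simp only [Matrix.mulVec, dotProduct, Matrix.map_apply, Fintype.sum_sum_type, Finset.univ_unique,
        Finset.sum_singleton, PUnit.default_eq_unit, m11, m12, m13, m14, m21, m22, m23, m24, m31, m32, m33, m34, m41, m42, m43, m44] at h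
      simp [apply_ite Complex.ofReal, ite_mul] at h
      linear_combination h)
  obtain ⟨c1, c2, c3, c4⟩ := hcore
  apply hx.2
  funext p
  rcases p with (i | i) | (⟨⟩ | i)
  · exact c1 i
  · exact c2 i
  · exact c3
  · exact c4 i
end

section
/- (Stability of the VCS Controller in the underload regime) Let E>0, g_l>0, flexible loads F = {1,…,n_F} (n_F ≥ 1), inflexible loads I = {n_F+1,…,n} nonempty with P_{0,j} > 0 for all j ∈ I, P_{0,i} ≥ 0 for i ∈ F, κ_i > 0 for i ∈ F, and b > 0. Suppose g* ∈ ℝⁿ_{≥0} satisfies the load satisfaction equations v(g*)²·g*ᵢ = P_{0,i} for all i = 1,…,n, where v(g) = E·g_l/(Σⱼ gⱼ + g_l), together with ḡ* = Σᵢ g*ᵢ < g_l. Then there exists a₀ > 0 such that for every a ∈ (0, a₀), all eigenvalues of the VCS Jacobian J_SC(g*) (with parameters a, b, κ) have negative real part; i.e., the high-voltage load satisfaction equilibrium is locally asymptotically stable. -/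
lemma quartic_RH (p q r s x Y : ℝ) (hp : 0 < p) (hq : 0 < q) (hr : 0 < r) (hs : 0 < s)
    (H : 0 < p * q * r - r ^ 2 - p ^ 2 * s) (hx : 0 ≤ x)
    (h1 : (4 * x ^ 3 + 3 * p * x ^ 2 + 2 * q * x + r) = Y * (4 * x + p))
    (h2 : (x ^ 4 + p * x ^ 3 + q * x ^ 2 + r * x + s)
      - Y * (6 * x ^ 2 + 3 * p * x + q) + Y ^ 2 = 0) : False := by
  have hq2 : 0 < q ^ 2 - 4 * s := by
    have h : 0 < p ^ 2 * (q ^ 2 - 4 * s) := by nlinarith [sq_nonneg (p * q - 2 * r)]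
    exact pos_of_mul_pos_right h (by positivity)
  have key : (x ^ 4 + p * x ^ 3 + q * x ^ 2 + r * x + s) * (4 * x + p) ^ 2
      - (4 * x ^ 3 + 3 * p * x ^ 2 + 2 * q * x + r) * (6 * x ^ 2 + 3 * p * x + q) * (4 * x + p)
      + (4 * x ^ 3 + 3 * p * x ^ 2 + 2 * q * x + r) ^ 2 = 0 := by
    rw [h1]; linear_combination (4 * x + p) ^ 2 * h2
  have e : (x ^ 4 + p * x ^ 3 + q * x ^ 2 + r * x + s) * (4 * x + p) ^ 2
      - (4 * x ^ 3 + 3 * p * x ^ 2 + 2 * q * x + r) * (6 * x ^ 2 + 3 * p * x + q) * (4 * x + p)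
      + (4 * x ^ 3 + 3 * p * x ^ 2 + 2 * q * x + r) ^ 2 =
      -((p * q * r - r ^ 2 - p ^ 2 * s) + x * (2 * p ^ 2 * r + 2 * p * (q ^ 2 - 4 * s))
        + x ^ 2 * (4 * (q ^ 2 - 4 * s) + 8 * p ^ 2 * q + 4 * p * r)
        + x ^ 3 * (32 * p * q + 8 * p ^ 3)
        + x ^ 4 * (32 * q + 48 * p ^ 2) + 96 * p * x ^ 5 + 64 * x ^ 6) := by ring
  rw [e] at key
  have : 0 < (p * q * r - r ^ 2 - p ^ 2 * s) + x * (2 * p ^ 2 * r + 2 * p * (q ^ 2 - 4 * s))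
        + x ^ 2 * (4 * (q ^ 2 - 4 * s) + 8 * p ^ 2 * q + 4 * p * r)
        + x ^ 3 * (32 * p * q + 8 * p ^ 3)
        + x ^ 4 * (32 * q + 48 * p ^ 2) + 96 * p * x ^ 5 + 64 * x ^ 6 := by positivity
  linarith

lemma quartic_RH_complex (p q r s : ℝ) (z : ℂ) (hp : 0 < p) (hq : 0 < q) (hr : 0 < r) (hs : 0 < s)
    (H : 0 < p * q * r - r ^ 2 - p ^ 2 * s)
    (hz : z ^ 4 + p * z ^ 3 + q * z ^ 2 + r * z + s = 0) : z.re < 0 := by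
  by_contra hx
  push Not at hx
  have hre := congrArg Complex.re hz
  have him := congrArg Complex.im hz
  simp [pow_succ] at hre him
  generalize z.re = x at *
  generalize z.im = y at *
  by_cases hy : y = 0
  · subst hy
    have : 0 < x ^ 4 + p * x ^ 3 + q * x ^ 2 + r * x + s := by positivity
    nlinarith
  · refine quartic_RH p q r s x (y ^ 2) hp hq hr hs H hx ?_ ?_
    · apply mul_left_cancel₀ hy
      linear_combination him
    · linear_combination hre

lemma rows (E gl a b : ℝ) {nF nI : ℕ}
    (P0 : Fin nF ⊕ Fin nI → ℝ) (κ : Fin nF → ℝ) (g : Fin nF ⊕ Fin nI → ℝ)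
    (v c : ℝ) (hv : v = E * gl / ((∑ j, g j) + gl))
    (hc : c = (v ^ 2 * (gl - ∑ j, g j) / ((∑ j, g j) + gl)) ^ 2)
    (hP : v ^ 2 * (∑ j, g j) - ∑ j, P0 j = 0) (μ : ℂ)
    (hμ : μ ∈ spectrum ℂ ((JSC E gl a b P0 κ g).map (Complex.ofReal : ℝ → ℂ))) :
    ∃ (f h : Fin nF → ℂ) (w : Fin nI → ℂ) (φ : ℂ),
      ¬ (f = 0 ∧ h = 0 ∧ w = 0 ∧ φ = 0) ∧
      (∀ i, μ * f i = ((2 * v ^ 2 / ((∑ j, g j) + gl) : ℝ) : ℂ) * (g (Sum.inl i) : ℂ) *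
          (∑ j, f j + ∑ j, w j) - (v ^ 2 + b) * f i - κ i * φ + b * h i) ∧
      (∀ i, μ * w i = ((2 * v ^ 2 / ((∑ j, g j) + gl) : ℝ) : ℂ) * (g (Sum.inr i) : ℂ) *
          (∑ j, f j + ∑ j, w j) - v ^ 2 * w i) ∧
      (μ * φ = c * (∑ j, f j + ∑ j, w j)) ∧
      (∀ i, μ * h i = a * (f i - h i)) := by
  have e1 : ∀ i j, JSC E gl a b P0 κ g (.inl (.inl i)) (.inl (.inl j)) =
      2 * v ^ 2 / ((∑ j, g j) + gl) * g (.inl i) + if i = j then -(v ^ 2 + b) else 0 := by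
    intro i j; rw [hv]; rfl
  have e2 : ∀ i j, JSC E gl a b P0 κ g (.inl (.inl i)) (.inl (.inr j)) =
      2 * v ^ 2 / ((∑ j, g j) + gl) * g (.inl i) + 0 := by
    intro i j; rw [hv]; rfl
  have e3 : ∀ i j, JSC E gl a b P0 κ g (.inl (.inl i)) (.inr (.inl j)) = -κ i := fun _ _ => rfl
  have e4 : ∀ i j, JSC E gl a b P0 κ g (.inl (.inl i)) (.inr (.inr j)) =
      if i = j then b else 0 := fun _ _ => rfl
  have e5 : ∀ i j, JSC E gl a b P0 κ g (.inl (.inr i)) (.inl (.inl j)) =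
      2 * v ^ 2 / ((∑ j, g j) + gl) * g (.inr i) + 0 := by
    intro i j; rw [hv]; rfl
  have e6 : ∀ i j, JSC E gl a b P0 κ g (.inl (.inr i)) (.inl (.inr j)) =
      2 * v ^ 2 / ((∑ j, g j) + gl) * g (.inr i) + if i = j then -(v ^ 2) else 0 := by
    intro i j; rw [hv]; rfl
  have e7 : ∀ i j, JSC E gl a b P0 κ g (.inl (.inr i)) (.inr (.inl j)) = 0 := fun _ _ => rfl
  have e8 : ∀ i j, JSC E gl a b P0 κ g (.inl (.inr i)) (.inr (.inr j)) = 0 := fun _ _ => rfl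
  have e9 : ∀ i j, JSC E gl a b P0 κ g (.inr (.inl i)) (.inl j) = c := by
    intro i j
    have : JSC E gl a b P0 κ g (.inr (.inl i)) (.inl j) =
      (v ^ 2 * (gl - ∑ j, g j) / ((∑ j, g j) + gl)) ^ 2 + (v ^ 2 * (∑ j, g j) - ∑ j, P0 j) *
        (2 * v ^ 2 * ((∑ j, g j) - 2 * gl) / ((∑ j, g j) + gl) ^ 2) := by rw [hv]; rfl
    rw [this, hP, hc]; ring
  have e10 : ∀ i j, JSC E gl a b P0 κ g (.inr (.inl i)) (.inr j) = 0 := fun _ _ => rfl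
  have e11 : ∀ i j, JSC E gl a b P0 κ g (.inr (.inr i)) (.inl (.inl j)) =
      if i = j then a else 0 := fun _ _ => rfl
  have e12 : ∀ i j, JSC E gl a b P0 κ g (.inr (.inr i)) (.inl (.inr j)) = 0 := fun _ _ => rfl
  have e13 : ∀ i j, JSC E gl a b P0 κ g (.inr (.inr i)) (.inr (.inr j)) =
      if i = j then -a else 0 := fun _ _ => rfl
  have e14 : ∀ i j, JSC E gl a b P0 κ g (.inr (.inr i)) (.inr (.inl j)) = 0 := fun _ _ => rfl
  rw [spectrum.mem_iff, Matrix.isUnit_iff_isUnit_det, isUnit_iff_ne_zero, not_not,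
    ← Matrix.exists_mulVec_eq_zero_iff] at hμ
  obtain ⟨u, hu0, hu⟩ := hμ
  rw [Matrix.sub_mulVec, sub_eq_zero, Algebra.algebraMap_eq_smul_one, Matrix.smul_mulVec,
    Matrix.one_mulVec] at hu
  refine ⟨fun i => u (.inl (.inl i)), fun i => u (.inr (.inr i)), fun i => u (.inl (.inr i)),
    u (.inr (.inl ())), ?_, ?_, ?_, ?_, ?_⟩
  · rintro ⟨h1, h2, h3, h4⟩
    apply hu0
    funext k
    rcases k with (k | k) | (k | k)
    · exact congrFun h1 k
    · exact congrFun h3 k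
    · exact h4
    · exact congrFun h2 k
  · intro i
    have := congrFun hu (.inl (.inl i))
    simp only [Matrix.mulVec, dotProduct, Fintype.sum_sum_type, Matrix.map_apply,
      Pi.smul_apply, smul_eq_mul] at this
    rw [this]
    simp only [e1, e2, e3, e4]
    generalize 2 * v ^ 2 / ((∑ j, g j) + gl) = k
    simp [add_mul, Finset.sum_add_distrib, apply_ite Complex.ofReal, ite_mul, ← Finset.mul_sum]
    ring
  · intro i
    have := congrFun hu (.inl (.inr i))
    simp only [Matrix.mulVec, dotProduct, Fintype.sum_sum_type, Matrix.map_apply,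
      Pi.smul_apply, smul_eq_mul] at this
    rw [this]
    simp only [e5, e6, e7, e8]
    generalize 2 * v ^ 2 / ((∑ j, g j) + gl) = k
    simp [add_mul, Finset.sum_add_distrib, apply_ite Complex.ofReal, ite_mul, ← Finset.mul_sum]
    ring
  · have := congrFun hu (.inr (.inl ()))
    simp only [Matrix.mulVec, dotProduct, Fintype.sum_sum_type, Matrix.map_apply,
      Pi.smul_apply, smul_eq_mul] at this
    rw [this]
    simp only [e9, e10]
    simp [mul_add, Finset.mul_sum]
  · intro i
    have := congrFun hu (.inr (.inr i))
    simp only [Matrix.mulVec, dotProduct, Fintype.sum_sum_type, Matrix.map_apply,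
      Pi.smul_apply, smul_eq_mul] at this
    rw [this]
    simp only [e11, e12, e13, e14]
    simp [apply_ite Complex.ofReal, ite_mul]
    ring

/-- Stability of the VCS controller in the underload regime: at a load satisfaction
equilibrium `g*` (where `v(g*)²·g*ᵢ = P₀ᵢ` for every load) with total conductance
`ḡ* < g_l`, there exists `a₀ > 0` such that for all `a ∈ (0, a₀)` every eigenvalue of the
VCS Jacobian `J_SC(g*)` has negative real part, i.e. the high-voltage load satisfaction
equilibrium is locally asymptotically stable. -/
theorem stmt_15 (E gl b : ℝ) (hE : 0 < E) (hgl : 0 < gl) (hb : 0 < b)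
    (nF nI : ℕ) (hnF : 1 ≤ nF) (hnI : 1 ≤ nI)
    (P0 : Fin nF ⊕ Fin nI → ℝ)
    (hP0F : ∀ i : Fin nF, 0 ≤ P0 (Sum.inl i))
    (hP0I : ∀ i : Fin nI, 0 < P0 (Sum.inr i))
    (κ : Fin nF → ℝ) (hκ : ∀ i, 0 < κ i)
    (g : Fin nF ⊕ Fin nI → ℝ) (hg : ∀ i, 0 ≤ g i)
    (heq : ∀ i, (E * gl / ((∑ j, g j) + gl)) ^ 2 * g i = P0 i)
    (hlt : (∑ i, g i) < gl) :
    ∃ a₀ > 0, ∀ a : ℝ, 0 < a → a < a₀ →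
      ∀ μ ∈ spectrum ℂ ((JSC E gl a b P0 κ g).map (Complex.ofReal : ℝ → ℂ)),
        μ.re < 0 := by
  set G := ∑ j, g j with hG
  have hG0 : 0 ≤ G := Finset.sum_nonneg fun i _ => hg i
  have hGl : 0 < G + gl := by linarith
  obtain ⟨v, hv⟩ : ∃ v, v = E * gl / (G + gl) := ⟨_, rfl⟩
  have hv0 : 0 < v := by rw [hv]; positivity
  have hP : v ^ 2 * G - ∑ j, P0 j = 0 := by
    rw [hG, Finset.mul_sum, ← Finset.sum_sub_distrib]
    exact Finset.sum_eq_zero fun i _ => by rw [← heq i, hv]; ring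
  obtain ⟨c, hc⟩ : ∃ c, c = (v ^ 2 * (gl - G) / (G + gl)) ^ 2 := ⟨_, rfl⟩
  have hc0 : 0 < c := by
    have : 0 < gl - G := by linarith
    rw [hc]; positivity
  obtain ⟨k, hk⟩ : ∃ k, k = 2 * v ^ 2 / (G + gl) := ⟨_, rfl⟩
  have hk0 : 0 < k := by rw [hk]; positivity
  obtain ⟨w, hw⟩ : ∃ w, w = v ^ 2 := ⟨_, rfl⟩
  have hw0 : 0 < w := by rw [hw]; positivity
  obtain ⟨α, hα⟩ : ∃ α, α = k * ∑ i, g (Sum.inl i) := ⟨_, rfl⟩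
  obtain ⟨β, hβ⟩ : ∃ β, β = k * ∑ i, g (Sum.inr i) := ⟨_, rfl⟩
  have hα0 : 0 ≤ α := by
    rw [hα]; exact mul_nonneg hk0.le (Finset.sum_nonneg fun i _ => hg _)
  have hβ0 : 0 ≤ β := by
    rw [hβ]; exact mul_nonneg hk0.le (Finset.sum_nonneg fun i _ => hg _)
  have hαβ : α + β < w := by
    have : α + β = k * G := by rw [hα, hβ, hG, Fintype.sum_sum_type]; ring
    rw [this, hk, hw, div_mul_eq_mul_div, div_lt_iff₀ hGl]
    have := pow_pos hv0 2
    nlinarith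
  obtain ⟨K, hK⟩ : ∃ K, K = ∑ i, κ i := ⟨_, rfl⟩
  have hK0 : 0 < K := by
    rw [hK]
    haveI : Nonempty (Fin nF) := ⟨⟨0, hnF⟩⟩
    exact Finset.sum_pos (fun i _ => hκ i) Finset.univ_nonempty
  obtain ⟨C, hC⟩ : ∃ C, C = K * c := ⟨_, rfl⟩
  have hC0 : 0 < C := by rw [hC]; positivity
  let p : ℝ → ℝ := fun a => 2 * w + a + b - β - α
  let q : ℝ → ℝ := fun a => w * a + (w + a + b) * (w - β) - α * (w + a) + C
  let r : ℝ → ℝ := fun a => w * a * (w - β - α) + C * (w + a)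
  let s : ℝ → ℝ := fun a => C * w * a
  let H : ℝ → ℝ := fun a => p a * q a * r a - r a ^ 2 - p a ^ 2 * s a
  have hd : 0 < w - β - α := by linarith
  have hcont : Continuous H := by fun_prop
  have hH0 : 0 < H 0 := by
    have h1 : w < p 0 := by simp only [p]; linarith
    have h2 : C < q 0 := by
      simp only [q]
      have := mul_pos hw0 hd
      have : 0 < b * (w - β) := mul_pos hb (by linarith)
      nlinarith
    have h3 : H 0 = C * w * (p 0 * q 0 - C * w) := by simp only [H, r, s]; ring
    rw [h3]
    have : w * C < p 0 * q 0 := mul_lt_mul'' h1 h2 hw0.le hC0.le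
    have : 0 < p 0 * q 0 - C * w := by linarith
    positivity
  obtain ⟨a₀, ha₀, hball⟩ := Metric.eventually_nhds_iff.1
    (hcont.continuousAt.eventually (lt_mem_nhds hH0))
  refine ⟨a₀, ha₀, fun a ha haa μ hμ => ?_⟩
  have hHa : 0 < H a := hball (by rw [Real.dist_eq, sub_zero, abs_of_pos ha]; exact haa)
  obtain ⟨f, h, z, φ, hne, hf, hz, hφ, hh⟩ := rows E gl a b P0 κ g v c hv hc hP μ hμ
  rw [← hG, ← hk] at hf hz
  have hwc : (v : ℂ) ^ 2 = (w : ℂ) := by rw [hw]; push_cast; rfl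
  simp only [hwc] at hf hz
  obtain ⟨F, hF⟩ : ∃ F, F = ∑ j, f j := ⟨_, rfl⟩
  obtain ⟨Z, hZ⟩ : ∃ Z, Z = ∑ j, z j := ⟨_, rfl⟩
  rw [← hF, ← hZ] at hφ
  simp only [← hF, ← hZ] at hf hz
  by_contra hre
  push Not at hre
  have hμa : μ + a ≠ 0 := by
    intro h; have := congrArg Complex.re h; simp at this; linarith
  have hμw : μ + w ≠ 0 := by
    intro h; have := congrArg Complex.re h; simp at this; linarith
  -- the quadratic `D (μ + a)`
  have hD : (μ + w) * (μ + a) + b * μ ≠ 0 := by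
    intro h
    have h1 := congrArg Complex.re h
    have h2 := congrArg Complex.im h
    simp at h1 h2
    have h3 : μ.im * (2 * μ.re + w + a + b) = 0 := by linear_combination h2
    rcases mul_eq_zero.1 h3 with h4 | h4
    · rw [h4] at h1
      have : 0 < (μ.re + w) * (μ.re + a) := by positivity
      have : 0 ≤ b * μ.re := by positivity
      linarith
    · linarith
  have hf' : ∀ i, ((μ + w) * (μ + a) + b * μ) * f i
      = (μ + a) * (k * (F + Z)) * g (Sum.inl i) - (μ + a) * φ * κ i := by
    intro i
    linear_combination (μ + a) * hf i + b * hh i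
  have hz' : ∀ i, (μ + w) * z i = k * (F + Z) * g (Sum.inr i) := by
    intro i
    linear_combination hz i
  have hFs : ((μ + w) * (μ + a) + b * μ) * F
      = (μ + a) * α * (F + Z) - (μ + a) * φ * K := by
    rw [hF, Finset.mul_sum, Finset.sum_congr rfl fun i _ => hf' i, Finset.sum_sub_distrib,
      ← Finset.mul_sum, ← Finset.mul_sum, ← hF, hα, hK]
    push_cast; ring
  have hZs : (μ + w) * Z = β * (F + Z) := by
    rw [hZ, Finset.mul_sum, Finset.sum_congr rfl fun i _ => hz' i, 
      ← Finset.mul_sum, ← hZ, hβ]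
    push_cast; ring
  have hzero : F + Z = 0 → φ = 0 → False := by
    intro h1 h2
    have hf0 : f = 0 := by
      funext i
      have := hf' i
      rw [h1, h2] at this
      simpa [hD] using this
    refine hne ⟨hf0, ?_, ?_, h2⟩
    · funext i
      have h3 : (μ + a) * h i = 0 := by
        have := hh i
        rw [hf0] at this
        simp at this
        linear_combination this
      simpa [hμa] using h3
    · funext i
      have := hz' i
      rw [h1] at this
      simpa [hμw] using this
  by_cases hU : F + Z = 0
  · apply hzero hU
    have hZ0 : Z = 0 := by
      rw [hU] at hZs; simpa [hμw] using hZs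
    have hF0 : F = 0 := by simpa [hZ0] using hU
    rw [hU, hF0] at hFs
    have hKc : (K : ℂ) ≠ 0 := by exact_mod_cast hK0.ne'
    simpa [hμa, hKc] using hFs
  · have hquart : μ ^ 4 + (p a : ℝ) * μ ^ 3 + (q a : ℝ) * μ ^ 2 + (r a : ℝ) * μ + (s a : ℝ) = 0 := by
      apply mul_left_cancel₀ hU
      simp only [p, q, r, s, hC]
      push_cast
      linear_combination μ * (μ + w) * hFs
        + μ * ((μ + w) * (μ + a) + b * μ) * hZs - (μ + a) * K * (μ + w) * hφ
    refine absurd (quartic_RH_complex (p a) (q a) (r a) (s a) μ ?_ ?_ ?_ ?_ hHa hquart)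
      (not_lt.2 hre)
    · simp only [p]; linarith
    · simp only [q]
      have hbw : 0 < b * (w - β) := mul_pos hb (by linarith)
      have h1 : w * a + (w + a + b) * (w - β) - α * (w + a) + C
          = w * a + (w + a) * (w - β - α) + b * (w - β) + C := by ring
      rw [h1]
      positivity
    · simp only [r]; positivity
    · simp only [s]; positivity
end

section
/- (Instability of the proportional allocation equilibrium below capacity) Let E>0, g_l>0, flexible loads F = {1,…,n_F} (n_F ≥ 1), inflexible loads I = {n_F+1,…,n} nonempty with P_{0,j} > 0 for all j ∈ I, P_{0,i} ≥ 0 for i ∈ F, κ_i > 0 for i ∈ F with κ̄ = Σ_{i∈F} κ_i, b > 0, and 0 < a < E²/4. Suppose P̄₀ = Σᵢ P_{0,i} < P_max = E²·g_l/4, and let g* ∈ ℝⁿ be the proportional allocation equilibrium: g*ᵢ = (4/E²)·(P_{0,i} + (κᵢ/κ̄)·(P_max − P̄₀)) for i ∈ F and g*ᵢ = (4/E²)·P_{0,i} for i ∈ I (so Σᵢ g*ᵢ = g_l and v(g*) = E/2, and the coefficient c evaluates to c* = (P̄₀ − P_max)·v*²/(2·g_l) < 0). Then the VCS Jacobian J_SC(g*)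 has an eigenvalue with positive real part; i.e., in the underload regime the proportional allocation equilibrium is unstable. -/
theorem aux_spec {ι : Type*} [Fintype ι] [DecidableEq ι] (A : Matrix ι ι ℝ) (u : ι → ℝ)
    (l : ℝ) (hu : u ≠ 0) (h : A.mulVec u = l • u) :
    (l : ℂ) ∈ spectrum ℂ (A.map (Complex.ofReal : ℝ → ℂ)) := by
  rw [spectrum.mem_iff, Matrix.isUnit_iff_isUnit_det, isUnit_iff_ne_zero, not_not,
    ← Matrix.exists_mulVec_eq_zero_iff]
  refine ⟨fun i => (u i : ℂ), ?_, ?_⟩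
  · intro h0
    apply hu
    funext i
    have := congrFun h0 i
    simpa using this
  · rw [Matrix.sub_mulVec]
    funext i
    have hi := congrFun h i
    simp only [Matrix.mulVec, dotProduct, Pi.smul_apply, smul_eq_mul] at hi
    have h2 : ∑ j, (A i j : ℂ) * (u j : ℂ) = (l : ℂ) * (u i : ℂ) := by
      exact_mod_cast congrArg (Complex.ofReal) hi
    simp only [Pi.sub_apply, Pi.zero_apply, Algebra.algebraMap_eq_smul_one,
      Matrix.smul_mulVec, Matrix.one_mulVec, Pi.smul_apply, smul_eq_mul]
    simp only [Matrix.mulVec, dotProduct, Matrix.map_apply]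
    rw [h2]
    ring

theorem aux_root (w a b s t K : ℝ) (hw : 0 < w) (ha : 0 < a) (hb : 0 < b) (hs : 0 ≤ s)
    (ht : 0 ≤ t) (hst : s + t = 1) (hK : 0 < K) :
    ∃ l : ℝ, 0 < l ∧
      t * w / (l + w) + (w * s + K / l) / (l + w + b - b * a / (l + a)) = 1 := by
  have hD : ∀ x : ℝ, 0 ≤ x → w ≤ x + w + b - b * a / (x + a) := by
    intro x hx
    have : b * a / (x + a) ≤ b := by
      rw [div_le_iff₀ (by linarith)]
      nlinarith [mul_nonneg hb.le hx]
    linarith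
  let h : ℝ → ℝ := fun x => x - (t * w * x / (x + w) +
    (w * s * x + K) / (x + w + b - b * a / (x + a)))
  have hM : 0 < w + K / w := by positivity
  have hcont : ContinuousOn h (Set.Icc 0 (w + K / w)) := by
    have h1 : ∀ x ∈ Set.Icc 0 (w + K / w), x + w ≠ 0 := fun x hx => by
      have := hx.1
      positivity
    have h2 : ∀ x ∈ Set.Icc 0 (w + K / w), x + a ≠ 0 := fun x hx => by
      have := hx.1
      positivity
    have h3 : ∀ x ∈ Set.Icc 0 (w + K / w), x + w + b - b * a / (x + a) ≠ 0 := fun x hx => by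
      have := hD x hx.1
      linarith
    apply ContinuousOn.sub continuousOn_id
    apply ContinuousOn.add
    · exact ContinuousOn.div (by fun_prop) (by fun_prop) h1
    · refine ContinuousOn.div (by fun_prop) (ContinuousOn.sub (by fun_prop) ?_) h3
      exact ContinuousOn.div (by fun_prop) (by fun_prop) h2
  have h0 : h 0 < 0 := by
    have : 0 < K / (0 + w + b - b * a / (0 + a)) :=
      div_pos hK (lt_of_lt_of_le hw (hD 0 le_rfl))
    simp only [h, mul_zero, zero_div, zero_add, zero_sub] at this ⊢
    linarith
  have h1 : 0 ≤ h (w + K / w) := by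
    generalize hm : w + K / w = M at *
    have e1 : t * w * M / (M + w) ≤ t * w := by
      rw [div_le_iff₀ (by linarith)]
      nlinarith [mul_nonneg (mul_nonneg ht hw.le) hw.le]
    have hDM : M ≤ M + w + b - b * a / (M + a) := by
      have : b * a / (M + a) ≤ b := by
        rw [div_le_iff₀ (by linarith)]
        nlinarith [mul_nonneg hb.le hM.le]
      linarith
    have hDw := hD M hM.le
    have hDp := lt_of_lt_of_le hw hDw
    have e2 : (w * s * M + K) / (M + w + b - b * a / (M + a)) ≤ w * s + K / w := by
      rw [div_le_iff₀ hDp, add_mul]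
      have e3 : w * s * M ≤ w * s * (M + w + b - b * a / (M + a)) :=
        mul_le_mul_of_nonneg_left hDM (by positivity)
      have e4 : K / w * w ≤ K / w * (M + w + b - b * a / (M + a)) :=
        mul_le_mul_of_nonneg_left hDw (by positivity)
      have e5 : K / w * w = K := by field_simp
      linarith
    have e6 : t * w + w * s = w := by
      rw [mul_comm t w, ← mul_add, add_comm t s, hst, mul_one]
    simp only [h]
    linarith
  obtain ⟨l, hl, hl0⟩ := intermediate_value_Icc hM.le hcont ⟨h0.le, h1⟩
  have hlne : l ≠ 0 := by
    rintro rfl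
    linarith
  have hlp : 0 < l := lt_of_le_of_ne hl.1 (Ne.symm hlne)
  refine ⟨l, hlp, ?_⟩
  have hDl := lt_of_lt_of_le hw (hD l hl.1)
  simp only [h] at hl0
  generalize l + w + b - b * a / (l + a) = D at *
  have : l + w ≠ 0 := by positivity
  have hD0 : D ≠ 0 := hDl.ne'
  field_simp at hl0 ⊢
  linarith

/-- Instability of the proportional allocation equilibrium below capacity: when total demand
is strictly below the network capacity `E²·g_l/4` and `0 < a < E²/4`, the VCS Jacobian at
the proportional allocation equilibrium `g*` has an eigenvalue with positive real part,
i.e. in the underload regime the proportional allocation equilibrium is unstable. -/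
theorem stmt_16 (E gl a b : ℝ) (hE : 0 < E) (hgl : 0 < gl) (hb : 0 < b)
    (ha : 0 < a) (haE : a < E ^ 2 / 4)
    (nF nI : ℕ) (hnF : 1 ≤ nF) (hnI : 1 ≤ nI)
    (P0 : Fin nF ⊕ Fin nI → ℝ)
    (hP0F : ∀ i : Fin nF, 0 ≤ P0 (Sum.inl i))
    (hP0I : ∀ i : Fin nI, 0 < P0 (Sum.inr i))
    (κ : Fin nF → ℝ) (hκ : ∀ i, 0 < κ i)
    (hunder : (∑ j, P0 j) < E ^ 2 * gl / 4)
    (g : Fin nF ⊕ Fin nI → ℝ)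
    (hgdef : g = Sum.elim
      (fun i => (4 / E ^ 2) *
        (P0 (Sum.inl i) + (κ i / ∑ k, κ k) * (E ^ 2 * gl / 4 - ∑ j, P0 j)))
      (fun i => (4 / E ^ 2) * P0 (Sum.inr i))) :
    ∃ μ ∈ spectrum ℂ ((JSC E gl a b P0 κ g).map (Complex.ofReal : ℝ → ℂ)),
      0 < μ.re := by
  have hne : Nonempty (Fin nF) := ⟨⟨0, hnF⟩⟩
  have hκs : 0 < ∑ k, κ k := Finset.sum_pos (fun i _ => hκ i) Finset.univ_nonempty
  have hE0 : E ≠ 0 := hE.ne'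
  have hFsum : ∑ i, g (Sum.inl i) = (4 / E ^ 2) *
      (∑ i, P0 (Sum.inl i) + (E ^ 2 * gl / 4 - ∑ j, P0 j)) := by
    subst hgdef
    simp only [Sum.elim_inl]
    rw [← Finset.mul_sum, Finset.sum_add_distrib, ← Finset.sum_mul, ← Finset.sum_div,
      div_self hκs.ne', one_mul]
  have hIsum : ∑ i, g (Sum.inr i) = (4 / E ^ 2) * ∑ i, P0 (Sum.inr i) := by
    subst hgdef
    simp only [Sum.elim_inr]
    rw [← Finset.mul_sum]
  have hgbar : ∑ j, g j = gl := by
    rw [Fintype.sum_sum_type, hFsum, hIsum, Fintype.sum_sum_type]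
    field_simp
    ring
  have hv : (E * gl / (gl + gl)) ^ 2 = E ^ 2 / 4 := by
    field_simp
    ring
  have hPF : 0 ≤ ∑ i, P0 (Sum.inl i) := Finset.sum_nonneg fun i _ => hP0F i
  have hPI : 0 ≤ ∑ i, P0 (Sum.inr i) := Finset.sum_nonneg fun i _ => (hP0I i).le
  have hF0 : 0 ≤ ∑ i, g (Sum.inl i) := by
    rw [hFsum]
    exact mul_nonneg (by positivity) (by linarith)
  have hI0 : 0 ≤ ∑ i, g (Sum.inr i) := by
    rw [hIsum]
    positivity
  set w : ℝ := E ^ 2 / 4 with hwdef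
  have hw : 0 < w := by positivity
  obtain ⟨c, hc⟩ : ∃ c : ℝ, c = (w * (gl - gl) / (gl + gl)) ^ 2 +
    (w * gl - ∑ j, P0 j) * (2 * w * (gl - 2 * gl) / (gl + gl) ^ 2) := ⟨_, rfl⟩
  have hcneg : c < 0 := by
    have e : c = -((w * gl - ∑ j, P0 j) * (w / (2 * gl))) := by
      rw [hc]
      field_simp
      ring
    have : 0 < (w * gl - ∑ j, P0 j) * (w / (2 * gl)) :=
      mul_pos (by rw [hwdef]; linarith) (by positivity)
    linarith
  obtain ⟨l, hl, hroot⟩ := aux_root w a b ((∑ i, g (Sum.inl i)) / gl)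
    ((∑ i, g (Sum.inr i)) / gl) ((∑ k, κ k) * (-c)) hw ha hb (by positivity) (by positivity)
    (by rw [← add_div, ← Fintype.sum_sum_type, hgbar, div_self hgl.ne'])
    (mul_pos hκs (by linarith))
  refine ⟨(l : ℂ), ?_, by simpa using hl⟩
  have hDpos : 0 < l + w + b - b * a / (l + a) := by
    have : b * a / (l + a) ≤ b := by
      rw [div_le_iff₀ (by linarith)]
      nlinarith [mul_pos hb hl]
    linarith
  obtain ⟨D, hD⟩ : ∃ D : ℝ, D = l + w + b - b * a / (l + a) := ⟨_, rfl⟩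
  rw [← hD] at hroot hDpos
  have hlw : l + w ≠ 0 := by positivity
  have hla : l + a ≠ 0 := by positivity
  let uF : Fin nF → ℝ := fun i => (w / gl * g (Sum.inl i) - κ i * (c / l)) / D
  let uI : Fin nI → ℝ := fun i => (w / gl * g (Sum.inr i)) / (l + w)
  have hubar : ∑ i, uF i + ∑ i, uI i = 1 := by
    simp only [uF, uI]
    rw [← Finset.sum_div, ← Finset.sum_div, Finset.sum_sub_distrib, ← Finset.mul_sum,
      ← Finset.mul_sum, ← Finset.sum_mul, ← hroot]
    field_simp
    ring
  apply aux_spec _ (Sum.elim (Sum.elim uF uI)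
    (Sum.elim (fun _ => c / l) (fun i => a * uF i / (l + a))))
  · intro h0
    have := congrFun h0 (Sum.inr (Sum.inl ()))
    simp only [Sum.elim_inr, Sum.elim_inl, Pi.zero_apply] at this
    have : c / l < 0 := div_neg_of_neg_of_pos hcneg hl
    linarith
  · have hwgl : 2 * w / (gl + gl) = w / gl := by
      field_simp
      ring
    have key : ∀ x : ℝ, ∑ i, x * uF i + ∑ i, x * uI i = x := by
      intro x
      rw [← Finset.mul_sum, ← Finset.mul_sum, ← mul_add, hubar, mul_one]
    funext p
    rcases p with (i | i) | (i | i)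
    · simp only [Matrix.mulVec, dotProduct, JSC, hgbar, hv, hwgl, Fintype.sum_sum_type,
        Sum.elim_inl, Sum.elim_inr, Pi.smul_apply, smul_eq_mul, add_mul, ite_mul, zero_mul,
        Finset.sum_add_distrib, Finset.sum_ite_eq, Finset.mem_univ, if_true,
        Finset.univ_unique, Finset.sum_singleton, Finset.sum_const_zero, add_zero]
      have hk := key (w / gl * g (Sum.inl i))
      have hu : uF i * D = w / gl * g (Sum.inl i) - κ i * (c / l) := by
        simp only [uF]
        field_simp
      have hab : b * (a * uF i / (l + a)) = b * a / (l + a) * uF i := by ring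
      rw [hab]
      rw [hD] at hu
      linarith
    · simp only [Matrix.mulVec, dotProduct, JSC, hgbar, hv, hwgl, Fintype.sum_sum_type,
        Sum.elim_inl, Sum.elim_inr, Pi.smul_apply, smul_eq_mul, add_mul, ite_mul, zero_mul,
        Finset.sum_add_distrib, Finset.sum_ite_eq, Finset.mem_univ, if_true,
        Finset.univ_unique, Finset.sum_singleton, Finset.sum_const_zero, add_zero]
      have hk := key (w / gl * g (Sum.inr i))
      have hu : uI i * (l + w) = w / gl * g (Sum.inr i) := by
        simp only [uI]
        field_simp
      linarith
    · simp only [Matrix.mulVec, dotProduct, JSC, hgbar, hv, Fintype.sum_sum_type,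
        Sum.elim_inl, Sum.elim_inr, Pi.smul_apply, smul_eq_mul, zero_mul,
        Finset.sum_const_zero, add_zero]
      have hsum : ∑ x, P0 (Sum.inl x) + ∑ x, P0 (Sum.inr x) = ∑ j, P0 j :=
        (Fintype.sum_sum_type _).symm
      simp only [hsum, ← hc]
      rw [key c]
      field_simp
    · simp only [Matrix.mulVec, dotProduct, JSC, Fintype.sum_sum_type,
        Sum.elim_inl, Sum.elim_inr, Pi.smul_apply, smul_eq_mul, ite_mul, zero_mul,
        Finset.sum_ite_eq, Finset.mem_univ, if_true, Finset.sum_const_zero, add_zero,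
        zero_add]
      field_simp
      ring
end

section
/- Let E>0 and g_l>0, and define λ̃(x) = (E·g_l)²·(g_l − x)/(x + g_l)³ for x ≥ g_l (equivalently, λ̃(x) = v(x)² − 2·v(x)²·x/(x+g_l) with v(x) = E·g_l/(x+g_l)). Then λ̃ is strictly decreasing on [g_l, 2g_l], strictly increasing on [2g_l, ∞), λ̃(g_l) = 0, λ̃(x) → 0 as x → ∞, and λ̃ attains its minimum over [g_l, ∞) at x = 2g_l with minimum value λ̃(2g_l) = −E²/27. -/
/-- Properties of `λ̃(x) = (E·g_l)²·(g_l − x)/(x + g_l)³` on `[g_l, ∞)`: it coincides with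
`v(x)² − 2·v(x)²·x/(x+g_l)` where `v(x) = E·g_l/(x+g_l)`, is strictly decreasing on
`[g_l, 2g_l]`, strictly increasing on `[2g_l, ∞)`, vanishes at `g_l`, tends to `0` at `∞`,
and attains its minimum over `[g_l, ∞)` at `x = 2g_l` with value `−E²/27`. -/
theorem stmt_17 (E gl : ℝ) (hE : 0 < E) (hgl : 0 < gl) :
    (∀ x : ℝ, gl ≤ x →
      (E * gl) ^ 2 * (gl - x) / (x + gl) ^ 3 =
        (E * gl / (x + gl)) ^ 2 - 2 * (E * gl / (x + gl)) ^ 2 * x / (x + gl)) ∧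
    StrictAntiOn (fun x : ℝ => (E * gl) ^ 2 * (gl - x) / (x + gl) ^ 3)
      (Set.Icc gl (2 * gl)) ∧
    StrictMonoOn (fun x : ℝ => (E * gl) ^ 2 * (gl - x) / (x + gl) ^ 3)
      (Set.Ici (2 * gl)) ∧
    (E * gl) ^ 2 * (gl - gl) / (gl + gl) ^ 3 = 0 ∧
    Filter.Tendsto (fun x : ℝ => (E * gl) ^ 2 * (gl - x) / (x + gl) ^ 3)
      Filter.atTop (nhds 0) ∧
    (∀ x : ℝ, gl ≤ x →
      (E * gl) ^ 2 * (gl - 2 * gl) / (2 * gl + gl) ^ 3 ≤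
        (E * gl) ^ 2 * (gl - x) / (x + gl) ^ 3) ∧
    (E * gl) ^ 2 * (gl - 2 * gl) / (2 * gl + gl) ^ 3 = -E ^ 2 / 27 := by
  have hK : 0 < (E * gl) ^ 2 := by positivity
  have key : ∀ x : ℝ, gl ≤ x → (E * gl) ^ 2 * (gl - x) / (x + gl) ^ 3 =
      (E * gl) ^ 2 * (2 * gl * ((x + gl)⁻¹) ^ 3 - ((x + gl)⁻¹) ^ 2) := by
    intro x hx
    have : x + gl ≠ 0 := by linarith
    field_simp
    ring
  have anti : StrictAntiOn (fun x : ℝ => (E * gl) ^ 2 * (gl - x) / (x + gl) ^ 3)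
      (Set.Icc gl (2 * gl)) := by
    intro x hx y hy hxy
    obtain ⟨hx1, hx2⟩ := hx
    obtain ⟨hy1, hy2⟩ := hy
    show (E * gl) ^ 2 * (gl - y) / (y + gl) ^ 3 < (E * gl) ^ 2 * (gl - x) / (x + gl) ^ 3
    rw [key x hx1, key y hy1]
    apply mul_lt_mul_of_pos_left _ hK
    have hxp : 0 < x + gl := by linarith
    have hyp : 0 < y + gl := by linarith
    have h1 : (y + gl)⁻¹ < (x + gl)⁻¹ := by gcongr
    have h2 : 1 ≤ 3 * gl * (y + gl)⁻¹ := by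
      rw [← div_eq_mul_inv, one_le_div hyp]; linarith
    have hw : 0 < (y + gl)⁻¹ := by positivity
    generalize (y + gl)⁻¹ = w at *
    generalize (x + gl)⁻¹ = u at *
    have h3 : 3 * gl * w < 3 * gl * u := by gcongr
    have h4 : 0 < 2 * gl * (u^2 + u * w + w^2) - (u + w) := by
      have : 0 < (u + w) * (3 * gl * (u + w) - 2) := mul_pos (by linarith) (by nlinarith)
      have : 0 ≤ gl * (u - w)^2 := by positivity
      nlinarith
    have := mul_pos (sub_pos.2 h1) h4
    nlinarith
  have mono : StrictMonoOn (fun x : ℝ => (E * gl) ^ 2 * (gl - x) / (x + gl) ^ 3)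
      (Set.Ici (2 * gl)) := by
    intro x hx y hy hxy
    have hx1 : 2 * gl ≤ x := hx
    have hy1 : 2 * gl ≤ y := hy
    show (E * gl) ^ 2 * (gl - x) / (x + gl) ^ 3 < (E * gl) ^ 2 * (gl - y) / (y + gl) ^ 3
    rw [key x (by linarith), key y (by linarith)]
    apply mul_lt_mul_of_pos_left _ hK
    have hxp : 0 < x + gl := by linarith
    have hyp : 0 < y + gl := by linarith
    have h1 : (y + gl)⁻¹ < (x + gl)⁻¹ := by gcongr
    have h2 : 3 * gl * (x + gl)⁻¹ ≤ 1 := by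
      rw [← div_eq_mul_inv, div_le_one hxp]; linarith
    have hw : 0 < (y + gl)⁻¹ := by positivity
    generalize (y + gl)⁻¹ = w at *
    generalize (x + gl)⁻¹ = u at *
    have h3 : 3 * gl * w < 3 * gl * u := by gcongr
    have h4 : 0 < (u + w) - 2 * gl * (u^2 + u * w + w^2) := by
      have a1 : 0 ≤ u * (1 - 3 * gl * u) := mul_nonneg (by linarith) (by linarith)
      have a2 : 0 < w * (1 - 3 * gl * w) := mul_pos (by linarith) (by linarith)
      have a3 : 0 ≤ w * (1 - 3 * gl * u) := mul_nonneg (by linarith) (by linarith)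
      have a4 : 0 < u * (1 - 3 * gl * w) := mul_pos (by linarith) (by linarith)
      nlinarith
    have := mul_pos (sub_pos.2 h1) h4
    nlinarith
  refine ⟨?_, anti, mono, by simp, ?_, ?_, ?_⟩
  · intro x hx
    have : x + gl ≠ 0 := by linarith
    field_simp
    ring
  · have hinv : Filter.Tendsto (fun x : ℝ => (x + gl)⁻¹) Filter.atTop (nhds 0) :=
      tendsto_inv_atTop_zero.comp (Filter.tendsto_atTop_add_const_right _ gl Filter.tendsto_id)
    have h := (((hinv.pow 3).const_mul (2 * gl)).sub (hinv.pow 2)).const_mul ((E * gl) ^ 2)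
    have h0 : (E * gl) ^ 2 * (2 * gl * (0:ℝ) ^ 3 - 0 ^ 2) = 0 := by ring
    rw [h0] at h
    refine h.congr' ?_
    filter_upwards [Filter.eventually_ge_atTop gl] with x hx
    exact (key x hx).symm
  · intro x hx
    rcases le_total x (2 * gl) with h | h
    · exact anti.antitoneOn ⟨hx, h⟩ ⟨by linarith, le_refl _⟩ h
    · exact mono.monotoneOn (Set.mem_Ici.2 le_rfl) h h
  · have : 2 * gl + gl = 3 * gl := by ring
    rw [this]
    field_simp
    ring
end
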